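/- arXiv:1112.3255 — 5 statements merged into one kernel-verified Lean document; each statement's English description precedes it below -/
import Mathlib

section
/- Let W be a finite reflection group on a finite-dimensional real inner product space V and let a ∈ V be a generic point for W. Then the set of extreme points of the convex hull conv{w(a) : w ∈ W} is exactly the orbit {w(a) : w ∈ W}; in particular every orbit point w(a) is a vertex of the permutahedron Perm^a(W). -/
/-!
The inclusion of the extreme points in the orbit is the general fact that the extreme points of a
convex hull lie in the generating set. For the converse, every `w ∈ W` is a linear isometry, so the
whole orbit lies on the sphere of radius `‖a‖` about the origin and the permutahedron lies in the
corresponding closed ball. An inner product space is strictly convex: the open segment between two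
distinct points of a closed ball lies in the open ball. Hence no orbit point is interior to a
nondegenerate segment of the permutahedron.
-/

open scoped RealInnerProductSpace

variable {V : Type*} [NormedAddCommGroup V] [InnerProductSpace ℝ V]

/-- `s` acts as the orthogonal reflection along the nonzero vector `α`:
`s v = v - 2 (⟪v,α⟫/⟪α,α⟫) α`. -/
def IsReflAlong (s : V ≃ₗᵢ[ℝ] V) (α : V) : Prop :=
  α ≠ 0 ∧ ∀ v : V, s v = v - ((2 * ⟪v, α⟫ / ⟪α, α⟫) • α)

/-- `s` is a reflection. -/
def IsReflection (s : V ≃ₗᵢ[ℝ] V) : Prop :=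
  ∃ α : V, IsReflAlong s α

/-- A reflection group: a subgroup of the group of linear isometries of `V` generated by
the reflections it contains. -/
def IsReflectionGroup (W : Subgroup (V ≃ₗᵢ[ℝ] V)) : Prop :=
  W = Subgroup.closure {s | IsReflection s ∧ s ∈ W}

/-- `a` is a generic point for `W`: it is fixed by no reflection belonging to `W`. -/
def IsGeneric (W : Subgroup (V ≃ₗᵢ[ℝ] V)) (a : V) : Prop :=
  ∀ s ∈ W, IsReflection s → s a ≠ a

/-- The `W`-orbit of the point `a`. -/
def orbitSet (W : Subgroup (V ≃ₗᵢ[ℝ] V)) (a : V) : Set V :=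
  {x | ∃ w ∈ W, x = w a}

/-- The permutahedron `Perm^a(W)`: the convex hull of the `W`-orbit of `a`. -/
noncomputable def permutahedron (W : Subgroup (V ≃ₗᵢ[ℝ] V)) (a : V) : Set V :=
  convexHull ℝ (orbitSet W a)

/-- A root system for `W`. -/
structure IsRootSystem (W : Subgroup (V ≃ₗᵢ[ℝ] V)) (Φ : Set V) : Prop where
  finite : Φ.Finite
  nonempty : Φ.Nonempty
  ne_zero : ∀ α ∈ Φ, α ≠ 0
  gen : W = Subgroup.closure {s | ∃ α ∈ Φ, IsReflAlong s α}
  line : ∀ α ∈ Φ, {β ∈ Φ | ∃ t : ℝ, β = t • α} = {α, -α}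
  stable : ∀ w ∈ W, (⇑w) '' Φ = Φ

/-- The positive system determined by the generic point `a`: roots `α` with `⟪a, α⟫ > 0`. -/
def posSystem (a : V) (Φ : Set V) : Set V :=
  {α ∈ Φ | 0 < ⟪a, α⟫}

/-- `Δ` is a simple system for the positive system `Φp`: `Δ ⊆ Φp` is linearly independent and
every element of `Φp` is a linear combination of `Δ` with nonnegative coefficients. -/
def IsSimpleSystem (Φp Δ : Set V) : Prop :=
  Δ ⊆ Φp ∧ LinearIndependent ℝ ((↑) : Δ → V) ∧
    ∀ β ∈ Φp, ∃ c : V →₀ ℝ, (c.support : Set V) ⊆ Δ ∧ (∀ v : V, 0 ≤ c v) ∧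
      β = c.sum fun v r => r • v

/-- The subgroup generated by the reflections along the vectors of `I`. -/
def genSubgroup (I : Set V) : Subgroup (V ≃ₗᵢ[ℝ] V) :=
  Subgroup.closure {s | ∃ β ∈ I, IsReflAlong s β}

/-- the extreme points of the permutahedron are exactly the orbit points. -/
theorem extremePoints_permutahedron_eq_orbit [FiniteDimensional ℝ V]
    (W : Subgroup (V ≃ₗᵢ[ℝ] V)) (hWfin : (W : Set (V ≃ₗᵢ[ℝ] V)).Finite)
    (hW : IsReflectionGroup W) (a : V) (ha : IsGeneric W a) :
    Set.extremePoints ℝ (permutahedron W a) = orbitSet W a := by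
  apply Set.Subset.antisymm extremePoints_convexHull_subset
  rintro x ⟨w, hw, rfl⟩
  have hball : permutahedron W a ⊆ Metric.closedBall 0 ‖a‖ := by
    apply convexHull_min _ (convex_closedBall 0 ‖a‖)
    rintro y ⟨u, -, rfl⟩
    simp
  refine ⟨subset_convexHull ℝ _ ⟨w, hw, rfl⟩, fun y hy z hz hyz => ?_⟩
  by_cases hne : y = z
  · subst hne
    simpa [eq_comm] using hyz
  · have hlt := openSegment_subset_ball_of_ne (hball hy) (hball hz) hne hyz
    simp at hlt
end

section
/- Let W be a finite reflection group with root system Φ, let a be a generic point for W, and let Φ⁺ = {α ∈ Φ : ⟨a, α⟩ > 0}. Then there exists a unique simple system for Φ⁺, i.e. a unique subset Δ ⊆ Φ⁺ that is linearly independent over ℝ and such that every element of Φ⁺ is a linear combination of Δ with nonnegative coefficients. -/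
/-!
Write `P` for the set of positive roots, which is finite and lies in the open half-space
`⟪a, ·⟫ > 0`.

Existence: a subset `D` of `P` that is minimal among those generating the same cone as `P` is
irredundant, i.e. no `α ∈ D` lies in the cone of `D \ {α}`. If two distinct `α, β ∈ D` formed an
acute angle, then `β - c • α` with `c > 0`, the reflection of `β` along `α`, would be a root. By
genericity it or its negative is positive, hence in the cone of `D`, and this makes `β` or `α`
redundant (`IsRootSystem.inner_nonpos`). Vectors in an open half-space with pairwise nonpositive
inner products are linearly independent.

Uniqueness: each root of a simple system spans an extremal ray of the cone of `P` and, by the line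
axiom, is the only positive root on that ray. So it is not a nonnegative combination of other
positive roots, and every simple system contains it (`IsRootSystem.simpleSystem_subset`).
-/

open scoped RealInnerProductSpace

variable {V : Type*} [NormedAddCommGroup V] [InnerProductSpace ℝ V]

/-- Nonnegative combinations in the finitely supported form used by `IsSimpleSystem` are exactly
the members of the pointed cone generated by the set. -/
lemma mem_hull_iff_exists_finsupp (S : Set V) (x : V) :
    x ∈ PointedCone.hull ℝ S ↔ ∃ c : V →₀ ℝ, (c.support : Set V) ⊆ S ∧ (∀ v : V, 0 ≤ c v) ∧
      x = c.sum fun v r => r • v := by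
  simp only [PointedCone.mem_hull_set, eq_comm (a := x)]

lemma inner_nonneg_of_mem_hull {a : V} {S : Set V} (hS : ∀ v ∈ S, 0 < ⟪a, v⟫) {x : V}
    (hx : x ∈ PointedCone.hull ℝ S) : 0 ≤ ⟪a, x⟫ := by
  induction hx using Submodule.span_induction with
  | mem x hx => exact (hS x hx).le
  | zero => simp
  | add x y _ _ hx hy => rw [inner_add_right]; exact add_nonneg hx hy
  | smul r x _ hx =>
    change 0 ≤ ⟪a, (r : ℝ) • x⟫
    rw [real_inner_smul_right]; exact mul_nonneg r.2 hx

/-- If `D` lies in an open half-space and some multiple of `α ∈ D` is the sum of an element `x` of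
the cone of `D` and an element `y` of the cone of `D \ {α}` lying in the same open half-space,
then `α` is redundant in `D`: moving the `α`-part of `x` to the left leaves a multiple
of `α` whose coefficient must be positive. -/
lemma mem_hull_diff_of_add_eq {a : V} {D : Set V} (hD : ∀ v ∈ D, 0 < ⟪a, v⟫) {α : V}
    (hα : α ∈ D) {r : ℝ} {y x : V} (hy : y ∈ PointedCone.hull ℝ (D \ {α})) (hy0 : 0 < ⟪a, y⟫)
    (hx : x ∈ PointedCone.hull ℝ D) (h : r • α = x + y) :
    α ∈ PointedCone.hull ℝ (D \ {α}) := by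
  have hx' : x ∈ Submodule.span {c : ℝ // 0 ≤ c} (insert α (D \ {α})) := by
    rwa [Set.insert_sdiff_singleton, Set.insert_eq_of_mem hα]
  obtain ⟨k, z, hz, rfl⟩ := Submodule.mem_span_insert.1 hx'
  have hz0 : 0 ≤ ⟪a, z⟫ := inner_nonneg_of_mem_hull (fun v hv => hD v hv.1) hz
  have key : (r - k) • α = z + y := by
    rw [sub_smul, h]
    change ((k : ℝ) • α + z) + y - (k : ℝ) • α = z + y
    abel
  have hpos : 0 < r - k := by
    have h1 : (r - k) * ⟪a, α⟫ = ⟪a, z⟫ + ⟪a, y⟫ := by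
      rw [← real_inner_smul_right, key, inner_add_right]
    by_contra hneg
    nlinarith [hD α hα, mul_nonneg (sub_nonneg.2 (not_lt.1 hneg)) (hD α hα).le]
  have hα_eq : (r - k)⁻¹ • (z + y) = α := by
    rw [← key, smul_smul, inv_mul_cancel₀ hpos.ne', one_smul]
  have hmem := Submodule.smul_mem _ (⟨(r - k)⁻¹, (inv_pos.2 hpos).le⟩ : {r : ℝ // 0 ≤ r})
    (Submodule.add_mem _ hz hy)
  exact hα_eq ▸ hmem

lemma exists_isReflAlong {α : V} (hα : α ≠ 0) : ∃ s : V ≃ₗᵢ[ℝ] V, IsReflAlong s α := by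
  refine ⟨(ℝ ∙ α)ᗮ.reflection, hα, fun v => ?_⟩
  rw [Submodule.reflection_orthogonal_apply, Submodule.reflection_singleton_apply,
    real_inner_self_eq_norm_sq, real_inner_comm]
  simp only [neg_sub, RCLike.ofReal_real_eq_id, id_eq, ← Nat.cast_smul_eq_nsmul ℝ, smul_smul]
  congr 2
  push_cast
  ring

namespace IsRootSystem

variable {W : Subgroup (V ≃ₗᵢ[ℝ] V)} {Φ : Set V}

lemma refl_mem_group (hΦ : IsRootSystem W Φ) {α : V} (hα : α ∈ Φ) {s : V ≃ₗᵢ[ℝ] V}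
    (hs : IsReflAlong s α) : s ∈ W := by
  rw [hΦ.gen]
  exact Subgroup.subset_closure ⟨α, hα, hs⟩

lemma sub_smul_mem (hΦ : IsRootSystem W Φ) {α β : V} (hα : α ∈ Φ) (hβ : β ∈ Φ) :
    β - (2 * ⟪β, α⟫ / ⟪α, α⟫) • α ∈ Φ := by
  obtain ⟨s, hs⟩ := exists_isReflAlong (hΦ.ne_zero α hα)
  rw [← hs.2 β, ← hΦ.stable s (hΦ.refl_mem_group hα hs)]
  exact ⟨β, hβ, rfl⟩

lemma neg_mem (hΦ : IsRootSystem W Φ) {α : V} (hα : α ∈ Φ) : -α ∈ Φ := by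
  have : -α ∈ {β ∈ Φ | ∃ t : ℝ, β = t • α} := by rw [hΦ.line α hα]; simp
  exact this.1

lemma inner_ne_zero (hΦ : IsRootSystem W Φ) {a : V} (ha : IsGeneric W a) {α : V} (hα : α ∈ Φ) :
    ⟪a, α⟫ ≠ 0 := by
  intro h
  obtain ⟨s, hs⟩ := exists_isReflAlong (hΦ.ne_zero α hα)
  refine ha s (hΦ.refl_mem_group hα hs) ⟨α, hs⟩ ?_
  rw [hs.2, h]
  simp

/-- Distinct members of an irredundant generating set of the positive cone have nonpositive inner product:
otherwise the root `β - c • α` obtained by reflection, with `c > 0`, is positive and makes `β`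
redundant, or is negative and makes `α` redundant. -/
lemma inner_nonpos (hΦ : IsRootSystem W Φ) {a : V} (ha : IsGeneric W a) {D : Set V}
    (hDP : D ⊆ posSystem a Φ) (hPD : posSystem a Φ ⊆ PointedCone.hull ℝ D)
    (hirr : ∀ α ∈ D, α ∉ PointedCone.hull ℝ (D \ {α})) {α β : V} (hα : α ∈ D) (hβ : β ∈ D)
    (hne : α ≠ β) : ⟪α, β⟫ ≤ 0 := by
  by_contra! hpos
  have hD : ∀ v ∈ D, 0 < ⟪a, v⟫ := fun v hv => (hDP hv).2
  have hγ := hΦ.sub_smul_mem (hDP hα).1 (hDP hβ).1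
  have hα0 : α ≠ 0 := hΦ.ne_zero α (hDP hα).1
  have hc : 0 < 2 * ⟪β, α⟫ / ⟪α, α⟫ := by
    rw [real_inner_comm]
    exact div_pos (by linarith) (real_inner_self_pos.2 hα0)
  set c := 2 * ⟪β, α⟫ / ⟪α, α⟫
  rcases lt_or_gt_of_ne (hΦ.inner_ne_zero ha hγ) with h | h
  · have hmem : -(β - c • α) ∈ posSystem a Φ :=
      ⟨hΦ.neg_mem hγ, by rw [inner_neg_right]; linarith⟩
    refine hirr α hα (mem_hull_diff_of_add_eq hD hα (r := c)
      (Submodule.subset_span ⟨hβ, hne.symm⟩) (hD β hβ) (hPD hmem) ?_)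
    abel
  · refine hirr β hβ (mem_hull_diff_of_add_eq hD hβ (r := 1) (y := c • α)
      (Submodule.smul_mem _ (⟨c, hc.le⟩ : {r : ℝ // 0 ≤ r}) (Submodule.subset_span ⟨hα, hne⟩))
      ?_ (hPD ⟨hγ, h⟩) ?_)
    · rw [real_inner_smul_right]; exact mul_pos hc (hD α hα)
    · rw [one_smul]; abel

/-- A simple root lies on an extremal ray of the positive cone, so every simple system contains
it. The functional `g` vanishing at `α` and equal to `1` on the other simple roots of `Δ` is
strictly positive on all positive roots other than `α`; hence `α` is not in the cone they span. -/
lemma simpleSystem_subset (hΦ : IsRootSystem W Φ) {a : V} {Δ Δ' : Set V}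
    (hΔ : IsSimpleSystem (posSystem a Φ) Δ) (hΔ' : IsSimpleSystem (posSystem a Φ) Δ') :
    Δ ⊆ Δ' := by
  classical
  intro α hα
  by_contra hα'
  have hαP := hΔ.1 hα
  have hαΦ : α ∈ Φ := hαP.1
  obtain ⟨g, hg⟩ : ∃ g : V →ₗ[ℝ] ℝ, ∀ v ∈ Δ, g v = if v = α then 0 else 1 := by
    have hli : LinearIndepOn ℝ id Δ := hΔ.2.1
    let b := Module.Basis.extend hli
    refine ⟨b.constr ℝ fun v => if (v : V) = α then 0 else 1, fun v hv => ?_⟩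
    have hb : b ⟨v, hli.subset_extend _ hv⟩ = v := Module.Basis.extend_apply_self hli _
    conv_lhs => rw [← hb]
    rw [Module.Basis.constr_basis]
  have hgα : g α = 0 := by simpa using hg α hα
  have hcone : ∀ x ∈ PointedCone.hull ℝ Δ, 0 < g x ∨ ∃ t : ℝ, x = t • α := by
    intro x hx
    have aux : 0 ≤ g x ∧ (0 < g x ∨ ∃ t : ℝ, x = t • α) := by
      induction hx using Submodule.span_induction with
      | mem x hx =>
        rw [hg x hx]
        split_ifs with h
        · exact ⟨le_rfl, Or.inr ⟨1, by simp [h]⟩⟩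
        · exact ⟨zero_le_one, Or.inl one_pos⟩
      | zero => exact ⟨by simp, Or.inr ⟨0, by simp⟩⟩
      | add x y _ _ hx hy =>
        rw [map_add]
        refine ⟨add_nonneg hx.1 hy.1, ?_⟩
        rcases hx.2 with h | ⟨t, ht⟩
        · exact Or.inl (by linarith [hy.1])
        · rcases hy.2 with h | ⟨u, hu⟩
          · exact Or.inl (by linarith [hx.1])
          · exact Or.inr ⟨t + u, by rw [ht, hu, add_smul]⟩
      | smul r x _ hx =>
        change 0 ≤ g ((r : ℝ) • x) ∧ (0 < g ((r : ℝ) • x) ∨ ∃ t : ℝ, (r : ℝ) • x = t • α)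
        rw [map_smul, smul_eq_mul]
        refine ⟨mul_nonneg r.2 hx.1, ?_⟩
        rcases r.2.eq_or_lt with h | h
        · exact Or.inr ⟨0, by rw [← h]; simp⟩
        · rcases hx.2 with h' | ⟨t, ht⟩
          · exact Or.inl (mul_pos h h')
          · exact Or.inr ⟨r * t, by rw [ht, smul_smul]⟩
    exact aux.2
  have hpos : ∀ β ∈ posSystem a Φ, β ≠ α → 0 < g β := by
    intro β hβ hne
    refine (hcone β ((mem_hull_iff_exists_finsupp Δ β).2 (hΔ.2.2 β hβ))).resolve_right ?_
    intro ht
    have hmem : β ∈ {β ∈ Φ | ∃ t : ℝ, β = t • α} := ⟨hβ.1, ht⟩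
    rw [hΦ.line α hαΦ] at hmem
    rcases hmem with h | h
    · exact hne h
    · have h1 := hβ.2
      rw [Set.mem_singleton_iff.1 h, inner_neg_right] at h1
      linarith [hαP.2]
  have hcone' : ∀ x ∈ PointedCone.hull ℝ Δ', 0 < g x ∨ x = 0 := by
    intro x hx
    induction hx using Submodule.span_induction with
    | mem x hx => exact Or.inl (hpos x (hΔ'.1 hx) fun h => hα' (h ▸ hx))
    | zero => exact Or.inr rfl
    | add x y _ _ hx hy =>
      rcases hx with hx | rfl
      · rcases hy with hy | rfl
        · exact Or.inl (by rw [map_add]; exact add_pos hx hy)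
        · exact Or.inl (by simpa using hx)
      · simpa using hy
    | smul r x _ hx =>
      change 0 < g ((r : ℝ) • x) ∨ (r : ℝ) • x = 0
      rcases hx with hx | rfl
      · rcases r.2.eq_or_lt with h | h
        · exact Or.inr (by rw [← h]; simp)
        · exact Or.inl (by rw [map_smul]; exact mul_pos h hx)
      · simp
  rcases hcone' α ((mem_hull_iff_exists_finsupp Δ' α).2 (hΔ'.2.2 α hαP)) with h | h
  · exact h.ne' hgα
  · exact hΦ.ne_zero α hαΦ h

/-- A minimal subset of the positive roots generating the positive cone is a simple system. -/
lemma exists_simpleSystem (hΦ : IsRootSystem W Φ) {a : V} (ha : IsGeneric W a) :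
    ∃ Δ : Set V, IsSimpleSystem (posSystem a Φ) Δ := by
  have hPfin : (posSystem a Φ).Finite := hΦ.finite.subset fun _ h => h.1
  have hfin : {D : Set V | D ⊆ posSystem a Φ ∧
      posSystem a Φ ⊆ (PointedCone.hull ℝ D : Set V)}.Finite :=
    hPfin.finite_subsets.subset fun _ h => h.1
  obtain ⟨D, ⟨hDP, hPD⟩, hmin⟩ :=
    hfin.exists_minimal ⟨posSystem a Φ, subset_rfl, Submodule.subset_span⟩
  have hirr : ∀ α ∈ D, α ∉ PointedCone.hull ℝ (D \ {α}) := by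
    intro α hα hmem
    have hle : PointedCone.hull ℝ D ≤ PointedCone.hull ℝ (D \ {α}) := by
      refine Submodule.span_le.2 fun v hv => ?_
      by_cases h : v = α
      · exact h ▸ hmem
      · exact Submodule.subset_span ⟨hv, h⟩
    have := hmin ⟨Set.sdiff_subset.trans hDP, fun x hx => hle (hPD hx)⟩ Set.sdiff_subset hα
    exact this.2 rfl
  refine ⟨D, hDP, ?_, fun β hβ => (mem_hull_iff_exists_finsupp D β).1 (hPD hβ)⟩
  refine LinearMap.BilinForm.linearIndependent_of_pairwise_le_zero (innerₗ V) ?_ (innerₗ V a) _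
    (fun i => (hDP i.2).2) fun i j hij => ?_
  · intro x hx
    exact real_inner_self_pos.2 hx
  · exact hΦ.inner_nonpos ha hDP hPD hirr i.2 j.2 (Subtype.coe_injective.ne hij)

end IsRootSystem

/-- there is a unique simple system for the positive system `Φ⁺`
determined by a generic point. -/
theorem existsUnique_simpleSystem [FiniteDimensional ℝ V]
    (W : Subgroup (V ≃ₗᵢ[ℝ] V)) (hWfin : (W : Set (V ≃ₗᵢ[ℝ] V)).Finite)
    (Φ : Set V) (hΦ : IsRootSystem W Φ) (a : V) (ha : IsGeneric W a) :
    ∃! Δ : Set V, IsSimpleSystem (posSystem a Φ) Δ := by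
  obtain ⟨Δ, hΔ⟩ := hΦ.exists_simpleSystem ha
  exact ⟨Δ, hΔ, fun Δ' hΔ' => Set.Subset.antisymm (hΦ.simpleSystem_subset hΔ' hΔ)
    (hΦ.simpleSystem_subset hΔ hΔ')⟩
end

section
/- Let W be a finite reflection group with root system Φ, a a generic point, Φ⁺ = {α ∈ Φ : ⟨a,α⟩ > 0}, and Δ a simple system for Φ⁺. Then for any two distinct simple roots α, β ∈ Δ, the inner product satisfies ⟨α, β⟩ ≤ 0. -/
/-!
If `⟪α, β⟫ > 0`, the root `γ = s_α β = β - k α` has `k > 0`, so its coordinates in `Δ` have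
both signs. Since `a` is generic, either `γ` or `-γ` is a positive root, whose coordinates
would have to be nonnegative (`IsSimpleSystem.coeff_nonneg`): a contradiction.
-/

open scoped RealInnerProductSpace

variable {V : Type*} [NormedAddCommGroup V] [InnerProductSpace ℝ V]

lemma IsRootSystem.exists_mem_isReflAlong {W : Subgroup (V ≃ₗᵢ[ℝ] V)} {Φ : Set V}
    (hΦ : IsRootSystem W Φ) {α : V} (hα : α ∈ Φ) : ∃ s ∈ W, IsReflAlong s α := by
  obtain ⟨s, hs⟩ := exists_isReflAlong (hΦ.ne_zero α hα)
  refine ⟨s, ?_, hs⟩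
  rw [hΦ.gen]
  exact Subgroup.subset_closure ⟨α, hα, hs⟩

lemma IsRootSystem.neg_mem_s3 {W : Subgroup (V ≃ₗᵢ[ℝ] V)} {Φ : Set V}
    (hΦ : IsRootSystem W Φ) {α : V} (hα : α ∈ Φ) : -α ∈ Φ := by
  have h : -α ∈ {β ∈ Φ | ∃ t : ℝ, β = t • α} := by
    rw [hΦ.line α hα]
    simp
  exact h.1

/-- A generic point is orthogonal to no root, since otherwise it would be fixed by the
reflection along that root. -/
lemma IsGeneric.inner_ne_zero {W : Subgroup (V ≃ₗᵢ[ℝ] V)} {Φ : Set V} {a : V}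
    (ha : IsGeneric W a) (hΦ : IsRootSystem W Φ) {γ : V} (hγ : γ ∈ Φ) : ⟪a, γ⟫ ≠ 0 := by
  intro h
  obtain ⟨s, hsW, hs⟩ := hΦ.exists_mem_isReflAlong hγ
  exact ha s hsW ⟨γ, hs⟩ (by simp [hs.2 a, h])

/-- A combination `x • α + y • β` of distinct simple roots that is a positive root has
nonnegative coefficients, by uniqueness of coordinates in `Δ`. -/
lemma IsSimpleSystem.coeff_nonneg {Φp Δ : Set V} (hΔ : IsSimpleSystem Φp Δ) {α β : V}
    (hα : α ∈ Δ) (hβ : β ∈ Δ) (hαβ : α ≠ β) {x y : ℝ} (h : x • α + y • β ∈ Φp) :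
    0 ≤ x ∧ 0 ≤ y := by
  obtain ⟨c, hcΔ, hc0, hc⟩ := hΔ.2.2 _ h
  have hind : LinearIndepOn ℝ id Δ := hΔ.2.1
  have hzero : Finsupp.single α x + Finsupp.single β y - c = 0 := by
    refine linearIndepOn_iff.1 hind _ ?_ ?_
    · exact Submodule.sub_mem _ (Submodule.add_mem _ (Finsupp.single_mem_supported ℝ x hα)
        (Finsupp.single_mem_supported ℝ y hβ)) hcΔ
    · rw [map_sub, map_add, Finsupp.linearCombination_single, Finsupp.linearCombination_single,
        Finsupp.linearCombination_apply, sub_eq_zero]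
      exact hc
  have hceq := sub_eq_zero.1 hzero
  have h1 := hc0 α
  have h2 := hc0 β
  rw [← hceq] at h1 h2
  simp only [Finsupp.add_apply, Finsupp.single_eq_same, Finsupp.single_eq_of_ne hαβ,
    Finsupp.single_eq_of_ne hαβ.symm, add_zero, zero_add] at h1 h2
  exact ⟨h1, h2⟩

/-- two distinct simple roots have nonpositive inner product. -/
theorem inner_nonpos_of_mem_simpleSystem [FiniteDimensional ℝ V]
    (W : Subgroup (V ≃ₗᵢ[ℝ] V)) (hWfin : (W : Set (V ≃ₗᵢ[ℝ] V)).Finite)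
    (Φ : Set V) (hΦ : IsRootSystem W Φ) (a : V) (ha : IsGeneric W a)
    (Δ : Set V) (hΔ : IsSimpleSystem (posSystem a Φ) Δ)
    {α β : V} (hα : α ∈ Δ) (hβ : β ∈ Δ) (hαβ : α ≠ β) :
    ⟪α, β⟫ ≤ 0 := by
  by_contra! hpos
  have hαΦ : α ∈ Φ := (hΔ.1 hα).1
  have hβΦ : β ∈ Φ := (hΔ.1 hβ).1
  obtain ⟨s, hsW, hs⟩ := hΦ.exists_mem_isReflAlong hαΦ
  have hk : 0 < 2 * ⟪β, α⟫ / ⟪α, α⟫ := by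
    rw [real_inner_comm]
    exact div_pos (by linarith) (real_inner_self_pos.2 hs.1)
  have hsβ := hs.2 β
  set k : ℝ := 2 * ⟪β, α⟫ / ⟪α, α⟫
  have hγΦ : s β ∈ Φ := by
    rw [← hΦ.stable s hsW]
    exact Set.mem_image_of_mem _ hβΦ
  rcases (ha.inner_ne_zero hΦ hγΦ).lt_or_gt with hneg | hgt
  · have hmem : k • α + (-1 : ℝ) • β ∈ posSystem a Φ := by
      have heq : k • α + (-1 : ℝ) • β = -s β := by rw [hsβ]; module
      rw [heq]
      exact ⟨hΦ.neg_mem_s3 hγΦ, by rw [inner_neg_right]; linarith⟩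
    linarith [(hΔ.coeff_nonneg hα hβ hαβ hmem).2]
  · have hmem : (-k) • α + (1 : ℝ) • β ∈ posSystem a Φ := by
      have heq : (-k) • α + (1 : ℝ) • β = s β := by rw [hsβ]; module
      rw [heq]
      exact ⟨hγΦ, hgt⟩
    linarith [(hΔ.coeff_nonneg hα hβ hαβ hmem).1]
end

section
/- Let W be a finite reflection group with root system Φ, a a generic point, Φ⁺ = {α ∈ Φ : ⟨a,α⟩ > 0}, Δ a simple system for Φ⁺, and S = {s_α : α ∈ Δ}. Define the matrix M : Δ × Δ → ℕ by M(α,β) = order of s_α s_β in W. Then M is a Coxeter matrix (M(α,α)=1, M(α,β)=M(β,α)≥2 for α≠β), and the canonical group homomorphism from the Coxeter group presented by M to W, sending the generator indexed by α to s_α, is a group isomorphism; that is, (W,S) is a Coxeter system. -/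
/-!
The basic geometric fact is that every root is a nonnegative or a nonpositive combination of
`Δ`. Consequently a simple reflection `s_α` permutes the positive roots other than `α`
(`SimpleData.eq_of_neg`), which yields the exchange property in the following form: if a product `w`
of simple reflections sends `α ∈ Δ` to a negative root, then `w s_α` is a product of fewer simple
reflections (`SimpleData.exists_shorter`). In particular a product of simple reflections that keeps
all simple roots positive is trivial (`SimpleData.wordMap_eq_one`). Simple reflections generate `W`
because every root lies in the orbit of a simple root under the group they generate
(`SimpleData.exists_wordMap_eq`).

For injectivity of the canonical map `φ` from the presented group `C` to `W`, call an element of `C`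
*reduced* if it is reached from `1` by multiplying on the right by generators `t_α`, each step
`y ↦ y t_α` satisfying `φ(y) α > 0`. The main point (`SimpleData.reduced_unique`) is that a reduced
element is determined by its image. Let `y t_α` and `z t_β` be reduced with the same image `w`.
From `w s_α` and from `w s_β` one descends inside the coset `w ⟨s_α, s_β⟩` to an element
keeping both `α` and `β` positive. Such an element of the coset is unique, so both descents end at
the same `u`. If `c` is a reduced lift of `u`, induction gives `y = c v₁` and
`z = c v₂` with `v₁, v₂ ∈ ⟨t_α, t_β⟩`. Now `v₁ t_α` and `v₂ t_β` have the same image under `φ`, and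
`φ` is injective on the dihedral subgroup `⟨t_α, t_β⟩`: rotations are controlled by the order of
`s_α s_β`, and the other elements have determinant `-1`. Hence `y t_α = z t_β`.
It follows that every element of `C` is reduced, and `φ` is injective.
-/

open scoped RealInnerProductSpace

variable {V : Type*} [NormedAddCommGroup V] [InnerProductSpace ℝ V]

/-! ### Simple roots with coordinates -/

/-- A simple system indexed by `ι`: the simple roots `e i`, the reflections `s i` along them, and
linear functionals `x i` extending the coordinate functions with respect to the `e i`.
A root is positive when its inner product with `a` is. -/
structure SimpleData (Φ : Set V) (a : V) {ι : Type*} [Fintype ι] (e : ι → V)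
    (s : ι → (V ≃ₗᵢ[ℝ] V)) (x : ι → V →ₗ[ℝ] ℝ) : Prop where
  finite : Φ.Finite
  e_mem : ∀ i, e i ∈ Φ
  e_pos : ∀ i, 0 < ⟪a, e i⟫
  refl : ∀ i, IsReflAlong (s i) (e i)
  stable : ∀ i, ∀ β ∈ Φ, s i β ∈ Φ
  neg_mem : ∀ β ∈ Φ, -β ∈ Φ
  inner_ne : ∀ β ∈ Φ, ⟪a, β⟫ ≠ 0
  line : ∀ i, ∀ β ∈ Φ, ∀ t : ℝ, β = t • e i → β = e i ∨ β = -e i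
  x_ne : ∀ i j, i ≠ j → x i (e j) = 0
  x_self : ∀ i, x i (e i) = 1
  x_nonneg : ∀ i, ∀ β ∈ Φ, 0 < ⟪a, β⟫ → 0 ≤ x i β
  expand : ∀ β ∈ Φ, 0 < ⟪a, β⟫ → β = ∑ i, x i β • e i

/-- The product of the isometries `s i` along a word in the indices. -/
def wordMap {ι : Type*} (s : ι → (V ≃ₗᵢ[ℝ] V)) (ω : List ι) : V ≃ₗᵢ[ℝ] V :=
  (ω.map s).prod

theorem wordMap_nil {ι : Type*} (s : ι → (V ≃ₗᵢ[ℝ] V)) : wordMap s [] = 1 := by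
  simp [wordMap]

theorem wordMap_cons {ι : Type*} (s : ι → (V ≃ₗᵢ[ℝ] V)) (i : ι) (ω : List ι) :
    wordMap s (i :: ω) = s i * wordMap s ω := by
  simp [wordMap]

theorem wordMap_append {ι : Type*} (s : ι → (V ≃ₗᵢ[ℝ] V)) (ω ω' : List ι) :
    wordMap s (ω ++ ω') = wordMap s ω * wordMap s ω' := by
  simp [wordMap]

theorem IsReflAlong.apply_self {s : V ≃ₗᵢ[ℝ] V} {α : V} (h : IsReflAlong s α) : s α = -α := by
  have h0 : ⟪α, α⟫ ≠ 0 := inner_self_ne_zero.mpr h.1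
  rw [h.2, mul_div_assoc, div_self h0, mul_one, two_smul]
  abel

theorem IsReflAlong.apply_apply {s : V ≃ₗᵢ[ℝ] V} {α : V} (h : IsReflAlong s α) (v : V) :
    s (s v) = v := by
  rw [h.2 v, map_sub, map_smul, h.apply_self, h.2 v]
  simp

theorem IsReflAlong.mul_self {s : V ≃ₗᵢ[ℝ] V} {α : V} (h : IsReflAlong s α) : s * s = 1 := by
  ext v
  exact h.apply_apply v

theorem IsReflAlong.conj {g s s' : V ≃ₗᵢ[ℝ] V} {α β : V} (h : IsReflAlong s α)
    (h' : IsReflAlong s' β) (hg : g α = β) : g * s = s' * g := by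
  ext v
  change g (s v) = s' (g v)
  subst hg
  rw [h.2, h'.2, map_sub, map_smul, LinearIsometryEquiv.inner_map_map,
    LinearIsometryEquiv.inner_map_map]

theorem IsReflAlong.unique {s s' : V ≃ₗᵢ[ℝ] V} {α : V} (h : IsReflAlong s α)
    (h' : IsReflAlong s' α) : s = s' := by
  ext v
  rw [h.2, h'.2]

theorem isReflAlong_reflection {α : V} (hα : α ≠ 0) :
    IsReflAlong (ℝ ∙ α)ᗮ.reflection α := by
  refine ⟨hα, fun v => ?_⟩
  rw [Submodule.reflection_orthogonal_apply, Submodule.reflection_singleton_apply,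
    real_inner_comm, real_inner_self_eq_norm_sq]
  simp only [RCLike.ofReal_real_eq_id, id, neg_sub]
  rw [← Nat.cast_smul_eq_nsmul ℝ, smul_smul, mul_div_assoc]
  norm_num

theorem IsReflAlong.det [FiniteDimensional ℝ V] {s : V ≃ₗᵢ[ℝ] V} {α : V} (h : IsReflAlong s α) :
    LinearMap.det (s.toLinearEquiv : V →ₗ[ℝ] V) = -1 := by
  rw [h.unique (isReflAlong_reflection h.1)]
  refine (Submodule.det_reflection _).trans ?_
  rw [Submodule.orthogonal_orthogonal, finrank_span_singleton h.1, pow_one]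

namespace SimpleData

variable {Φ : Set V} {a : V} {ι : Type*} [Fintype ι] {e : ι → V}
  {s : ι → (V ≃ₗᵢ[ℝ] V)} {x : ι → V →ₗ[ℝ] ℝ}

theorem x_apply (D : SimpleData Φ a e s x) {i j : ι} (h : i ≠ j) (v : V) :
    x i (s j v) = x i v := by
  rw [(D.refl j).2, map_sub, map_smul, D.x_ne i j h]
  simp

theorem apply_mul_self (D : SimpleData Φ a e s x) (w : V ≃ₗᵢ[ℝ] V) (i : ι) :
    ⟪a, (w * s i) (e i)⟫ = -⟪a, w (e i)⟫ := by
  change ⟪a, w (s i (e i))⟫ = _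
  rw [(D.refl i).apply_self, map_neg, inner_neg_right]

theorem mul_mul_self (D : SimpleData Φ a e s x) (w : V ≃ₗᵢ[ℝ] V) (i : ι) :
    w * s i * s i = w := by
  rw [mul_assoc, (D.refl i).mul_self, mul_one]

theorem wordMap_mem (D : SimpleData Φ a e s x) (ω : List ι) {β : V} (hβ : β ∈ Φ) :
    wordMap s ω β ∈ Φ := by
  induction ω with
  | nil => simpa [wordMap_nil] using hβ
  | cons i ω ih =>
    rw [wordMap_cons]
    exact D.stable i _ ih

/-- The only positive root that `s i` makes negative is `e i`: all coordinates other than the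
`i`-th are unchanged by `s i`. -/
theorem eq_of_neg (D : SimpleData Φ a e s x) {i : ι} {β : V} (hβ : β ∈ Φ) (hpos : 0 < ⟪a, β⟫)
    (hneg : ⟪a, s i β⟫ < 0) : β = e i := by
  have hx : ∀ j, j ≠ i → x j β = 0 := by
    intro j hj
    have h1 := D.x_nonneg j β hβ hpos
    have h2 := D.x_nonneg j _ (D.neg_mem _ (D.stable i β hβ))
      (by rw [inner_neg_right]; linarith)
    rw [map_neg, D.x_apply hj] at h2
    linarith
  have hexp : β = x i β • e i := by
    conv_lhs => rw [D.expand β hβ hpos]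
    refine Finset.sum_eq_single i (fun j _ hj => ?_) (by simp)
    rw [hx j hj, zero_smul]
  rcases D.line i β hβ _ hexp with h | h
  · exact h
  · have := D.e_pos i
    rw [h, inner_neg_right] at hpos
    linarith

/-- The exchange property. -/
theorem exists_shorter (D : SimpleData Φ a e s x) (i : ι) (ω : List ι)
    (h : ⟪a, wordMap s ω (e i)⟫ < 0) :
    ∃ ω' : List ι, ω'.length < ω.length ∧ wordMap s ω' = wordMap s ω * s i := by
  induction ω with
  | nil =>
    have := D.e_pos i
    rw [wordMap_nil] at h
    change ⟪a, e i⟫ < 0 at h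
    linarith
  | cons j ω ih =>
    rcases lt_or_gt_of_ne (D.inner_ne _ (D.wordMap_mem ω (D.e_mem i))) with h' | h'
    · obtain ⟨ω', hlen, hω'⟩ := ih h'
      exact ⟨j :: ω', by simpa using hlen, by rw [wordMap_cons, wordMap_cons, hω', mul_assoc]⟩
    · rw [wordMap_cons] at h
      have hj := D.eq_of_neg (D.wordMap_mem ω (D.e_mem i)) h' h
      refine ⟨ω, by simp, ?_⟩
      rw [wordMap_cons, mul_assoc, (D.refl i).conj (D.refl j) hj, ← mul_assoc,
        (D.refl j).mul_self, one_mul]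

theorem wordMap_eq_one (D : SimpleData Φ a e s x) (ω : List ι)
    (h : ∀ i, 0 < ⟪a, wordMap s ω (e i)⟫) : wordMap s ω = 1 := by
  induction hn : ω.length using Nat.strong_induction_on generalizing ω with
  | _ n ih =>
    rcases List.eq_nil_or_concat ω with rfl | ⟨ω₁, i, rfl⟩
    · exact wordMap_nil s
    · rw [List.concat_eq_append] at *
      have hi := h i
      have hw : wordMap s (ω₁ ++ [i]) = wordMap s ω₁ * s i := by
        rw [wordMap_append, wordMap_cons, wordMap_nil, mul_one]
      rw [hw, D.apply_mul_self] at hi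
      obtain ⟨ω₂, hlen, hω₂⟩ := D.exists_shorter i ω₁ (by linarith)
      rw [hw, ← hω₂] at h ⊢
      refine ih ω₂.length ?_ ω₂ h rfl
      rw [← hn, List.length_append]
      omega

/-- Every root is conjugate to a simple one under the simple reflections. For positive roots
this follows by descending along `⟪a, ·⟫`. -/
theorem exists_wordMap_eq (D : SimpleData Φ a e s x) {β : V} (hβ : β ∈ Φ) :
    ∃ (ω : List ι) (i : ι), wordMap s ω (e i) = β := by
  have key : ∀ β ∈ Φ, 0 < ⟪a, β⟫ → ∃ (ω : List ι) (i : ι), wordMap s ω (e i) = β := by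
    by_contra! hcon
    obtain ⟨β₀, h₀, hp₀, hb₀⟩ := hcon
    let B : Set V := {β | β ∈ Φ ∧ 0 < ⟪a, β⟫ ∧ ∀ (ω : List ι) (i : ι), wordMap s ω (e i) ≠ β}
    obtain ⟨β, ⟨hβ, hp, hb⟩, hmin⟩ := Set.exists_min_image B (fun β => ⟪a, β⟫)
      (D.finite.subset fun β h => h.1) ⟨β₀, h₀, hp₀, hb₀⟩
    have hi : ∃ i, 0 < ⟪β, e i⟫ := by
      by_contra! hle
      have hne : 0 < ⟪β, β⟫ := by
        rw [real_inner_self_pos]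
        rintro rfl
        simp at hp
      have : ⟪β, β⟫ ≤ 0 := by
        conv_lhs => arg 3; rw [D.expand β hβ hp]
        rw [inner_sum]
        refine Finset.sum_nonpos fun i _ => ?_
        rw [inner_smul_right]
        exact mul_nonpos_of_nonneg_of_nonpos (D.x_nonneg i β hβ hp) (hle i)
      linarith
    obtain ⟨i, hi⟩ := hi
    rcases lt_or_gt_of_ne (D.inner_ne _ (D.stable i β hβ)) with h | h
    · exact hb [] i (by rw [wordMap_nil]; exact (D.eq_of_neg hβ hp h).symm)
    · have hlt : ⟪a, s i β⟫ < ⟪a, β⟫ := by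
        rw [(D.refl i).2, inner_sub_right, inner_smul_right]
        have : 0 < ⟪e i, e i⟫ := real_inner_self_pos.mpr (D.refl i).1
        have := D.e_pos i
        have : 0 < 2 * ⟪β, e i⟫ / ⟪e i, e i⟫ * ⟪a, e i⟫ := by positivity
        linarith
      by_cases hB : s i β ∈ B
      · exact absurd (hmin _ hB) (not_le.mpr hlt)
      · have : ∃ (ω : List ι) (j : ι), wordMap s ω (e j) = s i β := by
          by_contra! hcon
          exact hB ⟨D.stable i β hβ, h, hcon⟩
        obtain ⟨ω, j, hω⟩ := this
        refine hb (i :: ω) j ?_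
        rw [wordMap_cons]
        change s i (wordMap s ω (e j)) = β
        rw [hω, (D.refl i).apply_apply]
  rcases lt_or_gt_of_ne (D.inner_ne β hβ) with h | h
  · obtain ⟨ω, i, hω⟩ := key (-β) (D.neg_mem β hβ) (by rw [inner_neg_right]; linarith)
    refine ⟨ω ++ [i], i, ?_⟩
    rw [wordMap_append, wordMap_cons, wordMap_nil, mul_one]
    change wordMap s ω (s i (e i)) = β
    rw [(D.refl i).apply_self, map_neg, hω, neg_neg]
  · exact key β hβ h

end SimpleData

/-! ### Reduced elements of the presented group -/

/-- Elements of `C` reached from `1` by right multiplications `y ↦ y * t i`, each performed at an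
element `y` for which `φ y` sends the simple root `e i` to a positive root. -/
inductive Reduced (a : V) {ι C : Type*} [Group C] (e : ι → V) (t : ι → C)
    (φ : C →* (V ≃ₗᵢ[ℝ] V)) : C → Prop
  | one : Reduced a e t φ 1
  | step (y : C) (i : ι) : Reduced a e t φ y → 0 < ⟪a, φ y (e i)⟫ → Reduced a e t φ (y * t i)

/-- `C` is generated by lifts `t i` of the simple reflections `s i` along `φ`, and every relation
`(s i * s j) ^ n = 1` lifts to `C`. -/
structure LiftData {ι C : Type*} [Group C] (s : ι → (V ≃ₗᵢ[ℝ] V)) (t : ι → C)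
    (φ : C →* (V ≃ₗᵢ[ℝ] V)) : Prop where
  map_t : ∀ i, φ (t i) = s i
  t_mul_self : ∀ i, t i * t i = 1
  pow_eq_one : ∀ i j (n : ℕ), (s i * s j) ^ n = 1 → (t i * t j) ^ n = 1
  exists_word : ∀ y : C, ∃ ω : List ι, y = (ω.map t).prod

namespace LiftData

variable {ι C : Type*} [Group C] {s : ι → (V ≃ₗᵢ[ℝ] V)} {t : ι → C} {φ : C →* (V ≃ₗᵢ[ℝ] V)}

theorem t_inv (L : LiftData s t φ) (i : ι) : (t i)⁻¹ = t i :=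
  inv_eq_of_mul_eq_one_right (L.t_mul_self i)

theorem map_eq_wordMap (L : LiftData s t φ) (y : C) : ∃ ω : List ι, φ y = wordMap s ω := by
  obtain ⟨ω, rfl⟩ := L.exists_word y
  refine ⟨ω, ?_⟩
  rw [map_list_prod, List.map_map, wordMap]
  congr 2
  funext i
  exact L.map_t i

/-- Induction over the subgroup generated by the two involutions `t i` and `t j`. -/
theorem pair_induction (L : LiftData s t φ) {i j : ι} {p : C → Prop} (one : p 1)
    (mul : ∀ y k, k = i ∨ k = j → p y → p (y * t k)) {y : C}
    (hy : y ∈ Subgroup.closure {t i, t j}) : p y := by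
  induction hy using Subgroup.closure_induction_right with
  | one => exact one
  | mul_right y _ z hz ih =>
    rcases hz with rfl | rfl
    · exact mul y i (Or.inl rfl) ih
    · exact mul y j (Or.inr rfl) ih
  | mul_inv_cancel y _ z hz ih =>
    rcases hz with rfl | rfl
    · rw [L.t_inv]; exact mul y i (Or.inl rfl) ih
    · rw [L.t_inv]; exact mul y j (Or.inr rfl) ih

theorem pair_form (L : LiftData s t φ) {i j : ι} {y : C}
    (hy : y ∈ Subgroup.closure {t i, t j}) :
    ∃ n : ℤ, y = (t i * t j) ^ n ∨ y = (t i * t j) ^ n * t i := by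
  refine L.pair_induction (p := fun y => ∃ n : ℤ, y = (t i * t j) ^ n ∨ y = (t i * t j) ^ n * t i)
    ?_ ?_ hy
  · exact ⟨0, Or.inl (by simp)⟩
  · intro y k hk ih
    obtain ⟨n, rfl | rfl⟩ := ih <;> rcases hk with rfl | rfl
    · exact ⟨n, Or.inr rfl⟩
    · refine ⟨n - 1, Or.inr ?_⟩
      rw [zpow_sub_one, mul_inv_rev, L.t_inv, L.t_inv]
      simp only [mul_assoc]
      rw [L.t_mul_self, mul_one]
    · exact ⟨n, Or.inl (by rw [mul_assoc, L.t_mul_self, mul_one])⟩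
    · exact ⟨n + 1, Or.inl (by rw [zpow_add_one, mul_assoc])⟩

/-- `φ` is injective on the subgroup generated by two of the generators. -/
theorem pair_injective [FiniteDimensional ℝ V] (L : LiftData s t φ) {e : ι → V}
    (hs : ∀ i, IsReflAlong (s i) (e i)) {i j : ι} {y : C}
    (hy : y ∈ Subgroup.closure {t i, t j}) (h : φ y = 1) : y = 1 := by
  obtain ⟨n, rfl | rfl⟩ := L.pair_form hy
  · rw [map_zpow, map_mul, L.map_t, L.map_t, ← pow_natAbs_eq_one] at h
    rw [← pow_natAbs_eq_one]
    exact L.pow_eq_one i j _ h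
  · exfalso
    let d : (V ≃ₗᵢ[ℝ] V) →* ℝ :=
      { toFun := fun g => LinearMap.det (g.toLinearEquiv : V →ₗ[ℝ] V)
        map_one' := LinearMap.det_id
        map_mul' := fun g g' => LinearMap.det_comp _ _ }
    have hd : ∀ k, d (s k) = -1 := fun k => (hs k).det
    have hp : d (s i * s j) = 1 := by rw [map_mul, hd, hd]; norm_num
    have hz : d ((s i * s j) ^ n) = 1 := by
      obtain ⟨m, rfl | rfl⟩ := n.eq_nat_or_neg
      · rw [zpow_natCast, map_pow, hp, one_pow]
      · have h1 : d ((s i * s j) ^ (-(m : ℤ))) * d ((s i * s j) ^ m) = 1 := by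
          rw [← map_mul, zpow_neg, zpow_natCast, inv_mul_cancel, map_one]
        rwa [map_pow, hp, one_pow, mul_one] at h1
    have h2 := congrArg d h
    rw [map_mul, map_zpow, map_mul φ (t i) (t j), L.map_t, L.map_t, map_mul, hz, hd, map_one] at h2
    norm_num at h2

end LiftData

namespace SimpleData

variable {Φ : Set V} {a : V} {ι C : Type*} [Group C] [Fintype ι] {e : ι → V}
  {s : ι → (V ≃ₗᵢ[ℝ] V)} {x : ι → V →ₗ[ℝ] ℝ} {t : ι → C} {φ : C →* (V ≃ₗᵢ[ℝ] V)}

theorem exists_reduced (D : SimpleData Φ a e s x) (L : LiftData s t φ) (ω : List ι) :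
    ∃ y, Reduced a e t φ y ∧ φ y = wordMap s ω := by
  induction hn : ω.length using Nat.strong_induction_on generalizing ω with
  | _ n ih =>
    by_cases h : ∀ i, 0 < ⟪a, wordMap s ω (e i)⟫
    · exact ⟨1, .one, by rw [map_one, D.wordMap_eq_one ω h]⟩
    · push Not at h
      obtain ⟨i, hi⟩ := h
      have hi := lt_of_le_of_ne hi (D.inner_ne _ (D.wordMap_mem ω (D.e_mem i)))
      obtain ⟨ω', hlen, hω'⟩ := D.exists_shorter i ω hi
      obtain ⟨y, hy, hφ⟩ := ih ω'.length (hn ▸ hlen) ω' rfl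
      refine ⟨y * t i, .step y i hy ?_, ?_⟩
      · rw [hφ, hω', D.apply_mul_self]
        linarith
      · rw [map_mul, hφ, hω', L.map_t, D.mul_mul_self]

/-- Descent in the coset of `wordMap s ω` modulo `⟨s i, s j⟩` to an element keeping `e i` and
`e j` positive; reading the descent backwards turns a reduced lift of the end point into a reduced
lift of the starting point. -/
theorem exists_coset_min (D : SimpleData Φ a e s x) (L : LiftData s t φ) (i j : ι)
    (ω : List ι) :
    ∃ v ∈ Subgroup.closure {t i, t j},
      (∀ k, k = i ∨ k = j → 0 < ⟪a, (wordMap s ω * φ v⁻¹) (e k)⟫) ∧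
      ∀ z, Reduced a e t φ z → φ z = wordMap s ω * φ v⁻¹ → Reduced a e t φ (z * v) := by
  induction hn : ω.length using Nat.strong_induction_on generalizing ω with
  | _ n ih =>
    by_cases h : ∀ k, k = i ∨ k = j → 0 < ⟪a, wordMap s ω (e k)⟫
    · refine ⟨1, one_mem _, ?_, ?_⟩
      · simpa using h
      · intro z hz _
        rwa [mul_one]
    · push Not at h
      obtain ⟨k, hk, hle⟩ := h
      have hneg := lt_of_le_of_ne hle (D.inner_ne _ (D.wordMap_mem ω (D.e_mem k)))
      obtain ⟨ω', hlen, hω'⟩ := D.exists_shorter k ω hneg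
      obtain ⟨v, hv, hpos, hred⟩ := ih ω'.length (hn ▸ hlen) ω' rfl
      have hkmem : t k ∈ Subgroup.closure {t i, t j} :=
        Subgroup.subset_closure (by rcases hk with rfl | rfl <;> simp)
      have heq : wordMap s ω * φ (v * t k)⁻¹ = wordMap s ω' * φ v⁻¹ := by
        rw [hω', mul_inv_rev, L.t_inv, map_mul, L.map_t, mul_assoc]
      refine ⟨v * t k, mul_mem hv hkmem, ?_, ?_⟩
      · rwa [heq]
      · intro z hz hφ
        rw [heq] at hφ
        rw [← mul_assoc]
        refine .step _ k (hred z hz hφ) ?_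
        have : φ (z * v) = wordMap s ω' := by
          rw [map_mul, hφ, map_inv, inv_mul_cancel_right]
        rw [this, hω', D.apply_mul_self]
        linarith

/-- A coset modulo `⟨s i, s j⟩` contains at most one element keeping `e i` and `e j`
positive: the quotient `φ v` of two such elements keeps every simple root positive. -/
theorem coset_min_unique (D : SimpleData Φ a e s x) (L : LiftData s t φ) {i j : ι}
    (u : V ≃ₗᵢ[ℝ] V) {v : C} (hv : v ∈ Subgroup.closure {t i, t j})
    (h₁ : ∀ k, k = i ∨ k = j → 0 < ⟪a, u (e k)⟫)
    (h₂ : ∀ k, k = i ∨ k = j → 0 < ⟪a, (u * φ v) (e k)⟫) : φ v = 1 := by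
  have hx : ∀ l, ¬ (l = i ∨ l = j) → ∀ β, x l (φ v β) = x l β := by
    intro l hl
    refine L.pair_induction (p := fun v => ∀ β, x l (φ v β) = x l β) ?_ ?_ hv
    · intro β
      simp
    · intro y k hk ih β
      rw [map_mul, L.map_t]
      change x l (φ y (s k β)) = _
      rw [ih, D.x_apply]
      rintro rfl
      exact hl hk
  obtain ⟨ω, hω⟩ := L.map_eq_wordMap v
  rw [hω] at hx h₂ ⊢
  refine D.wordMap_eq_one ω fun l => ?_
  have hmem := D.wordMap_mem ω (D.e_mem l)
  by_contra hle
  have hneg := lt_of_le_of_ne (not_lt.mp hle) (D.inner_ne _ hmem)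
  have hmem' := D.neg_mem _ hmem
  have hpos : 0 < ⟪a, -wordMap s ω (e l)⟫ := by rw [inner_neg_right]; linarith
  by_cases hl : l = i ∨ l = j
  · -- `-(φ v) (e l)` is a nonnegative combination of `e i` and `e j`, which `u` keeps positive.
    have h3 := h₂ l hl
    have h4 : 0 ≤ ⟪a, u (-wordMap s ω (e l))⟫ := by
      rw [D.expand _ hmem' hpos, map_sum, inner_sum]
      refine Finset.sum_nonneg fun k _ => ?_
      rw [map_smul, inner_smul_right]
      by_cases hk : k = i ∨ k = j
      · exact mul_nonneg (D.x_nonneg k _ hmem' hpos) (h₁ k hk).le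
      · have hkl : k ≠ l := by
          rintro rfl
          exact hk hl
        rw [map_neg, hx k hk, D.x_ne k l hkl]
        simp
    rw [map_neg, inner_neg_right] at h4
    change 0 < ⟪a, u (wordMap s ω (e l))⟫ at h3
    linarith
  · have h3 := D.x_nonneg l _ hmem' hpos
    rw [map_neg, hx l hl, D.x_self] at h3
    linarith

theorem reduced_unique [FiniteDimensional ℝ V] (D : SimpleData Φ a e s x) (L : LiftData s t φ)
    (ω : List ι) {y z : C} (hy : Reduced a e t φ y) (hz : Reduced a e t φ z)
    (hφy : φ y = wordMap s ω) (hφz : φ z = wordMap s ω) : y = z := by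
  induction hn : ω.length using Nat.strong_induction_on generalizing ω y z with
  | _ n ih =>
    have hdesc : ∀ y' i, 0 < ⟪a, φ y' (e i)⟫ → φ (y' * t i) = wordMap s ω →
        ⟪a, wordMap s ω (e i)⟫ < 0 := by
      intro y' i hpos h
      rw [← h, map_mul, L.map_t, D.apply_mul_self]
      linarith
    have hone : ∀ i, wordMap s ω = 1 → ¬ ⟪a, wordMap s ω (e i)⟫ < 0 := by
      intro i h
      rw [h]
      exact not_lt.mpr (D.e_pos i).le
    cases hy with
    | one =>
      cases hz with
      | one => rfl
      | step z' j hz' hj =>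
        rw [map_one] at hφy
        exact absurd (hdesc z' j hj hφz) (hone j hφy.symm)
    | step y' i hy' hi =>
      cases hz with
      | one =>
        rw [map_one] at hφz
        exact absurd (hdesc y' i hi hφy) (hone i hφz.symm)
      | step z' j hz' hj =>
        obtain ⟨ω₁, hl₁, hω₁⟩ := D.exists_shorter i ω (hdesc y' i hi hφy)
        obtain ⟨ω₂, hl₂, hω₂⟩ := D.exists_shorter j ω (hdesc z' j hj hφz)
        obtain ⟨v₁, hv₁, hp₁, hr₁⟩ := D.exists_coset_min L i j ω₁
        obtain ⟨v₂, hv₂, hp₂, hr₂⟩ := D.exists_coset_min L i j ω₂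
        have hφy' : φ y' = wordMap s ω₁ := by
          rw [hω₁, ← hφy, map_mul, L.map_t, D.mul_mul_self]
        have hφz' : φ z' = wordMap s ω₂ := by
          rw [hω₂, ← hφz, map_mul, L.map_t, D.mul_mul_self]
        have himem : t i ∈ Subgroup.closure {t i, t j} := Subgroup.subset_closure (by simp)
        have hjmem : t j ∈ Subgroup.closure {t i, t j} := Subgroup.subset_closure (by simp)
        have hvmem : v₁ * t i * (v₂ * t j)⁻¹ ∈ Subgroup.closure {t i, t j} :=
          mul_mem (mul_mem hv₁ himem) (inv_mem (mul_mem hv₂ hjmem))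
        have hu : wordMap s ω₁ * φ v₁⁻¹ * φ (v₁ * t i * (v₂ * t j)⁻¹) =
            wordMap s ω₂ * φ v₂⁻¹ := by
          rw [← hφy', ← hφz', ← map_mul, ← map_mul, ← map_mul]
          have h1 : y' * v₁⁻¹ * (v₁ * t i * (v₂ * t j)⁻¹) = y' * t i * t j * v₂⁻¹ := by
            rw [mul_inv_rev, L.t_inv]
            group
          have h2 : z' * v₂⁻¹ = z' * t j * t j * v₂⁻¹ := by
            rw [mul_assoc z', L.t_mul_self, mul_one]
          rw [h1, h2, map_mul, map_mul, map_mul φ (z' * t j * t j), map_mul φ (z' * t j),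
            hφy, hφz]
        have hker := D.coset_min_unique L _ hvmem hp₁ (by rwa [hu])
        have hv : v₁ * t i = v₂ * t j :=
          mul_inv_eq_one.mp (L.pair_injective D.refl hvmem hker)
        rw [hker, mul_one] at hu
        obtain ⟨ω₀, hω₀⟩ := L.map_eq_wordMap (y' * v₁⁻¹)
        rw [map_mul, hφy'] at hω₀
        obtain ⟨c, hc, hφc⟩ := D.exists_reduced L ω₀
        rw [← hω₀] at hφc
        have hy1 : y' = c * v₁ := ih ω₁.length (hn ▸ hl₁) ω₁ hy' (hr₁ c hc hφc) hφy'
          (by rw [map_mul, hφc, map_inv, inv_mul_cancel_right]) rfl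
        have hz1 : z' = c * v₂ := ih ω₂.length (hn ▸ hl₂) ω₂ hz' (hr₂ c hc (hφc.trans hu)) hφz'
          (by rw [map_mul, hφc.trans hu, map_inv, inv_mul_cancel_right]) rfl
        rw [hy1, hz1, mul_assoc, hv, mul_assoc]

theorem reduced_of_word [FiniteDimensional ℝ V] (D : SimpleData Φ a e s x)
    (L : LiftData s t φ) (ω : List ι) : Reduced a e t φ (ω.map t).prod := by
  induction ω using List.reverseRecOn with
  | nil => exact .one
  | append_singleton ω i ih =>
    rw [List.map_append, List.prod_append, List.map_singleton, List.prod_singleton]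
    set y := (ω.map t).prod with hy
    obtain ⟨ω', hω'⟩ := L.map_eq_wordMap y
    have hne := D.inner_ne _ (D.wordMap_mem ω' (D.e_mem i))
    rcases lt_or_gt_of_ne hne with h | h
    · -- A reduced lift `z` of `φ y * s i` satisfies `z * t i = y`, so `y * t i = z`.
      obtain ⟨ω₁, -, hω₁⟩ := D.exists_shorter i ω' h
      obtain ⟨z, hz, hφz⟩ := D.exists_reduced L ω₁
      have hz' : Reduced a e t φ (z * t i) := by
        refine .step z i hz ?_
        rw [hφz, hω₁, D.apply_mul_self]
        linarith
      have hyz := D.reduced_unique L ω' ih hz' hω'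
        (by rw [map_mul, hφz, hω₁, L.map_t, D.mul_mul_self])
      rwa [hyz, mul_assoc, L.t_mul_self, mul_one]
    · exact .step y i ih (by rwa [hω'])

theorem lift_injective [FiniteDimensional ℝ V] (D : SimpleData Φ a e s x)
    (L : LiftData s t φ) : Function.Injective φ := by
  rw [injective_iff_map_eq_one]
  intro y hy
  obtain ⟨ω, rfl⟩ := L.exists_word y
  exact D.reduced_unique L [] (D.reduced_of_word L ω) .one (by rw [hy, wordMap_nil])
    (by rw [map_one, wordMap_nil])

end SimpleData

/-! ### From the root system to the Coxeter system -/

theorem exists_coords {Φp Δ : Set V} [Fintype Δ] (h : IsSimpleSystem Φp Δ) :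
    ∃ x : Δ → V →ₗ[ℝ] ℝ, (∀ i j : Δ, i ≠ j → x i j = 0) ∧ (∀ i : Δ, x i i = 1) ∧
      ∀ β ∈ Φp, (∀ i, 0 ≤ x i β) ∧ β = ∑ i, x i β • (i : V) := by
  classical
  obtain ⟨-, hli, hexp⟩ := h
  obtain ⟨g, hg⟩ := LinearMap.exists_leftInverse_of_injective
    (Finsupp.linearCombination ℝ ((↑) : Δ → V)) (LinearMap.ker_eq_bot.mpr hli)
  have hgc : ∀ c, g (Finsupp.linearCombination ℝ ((↑) : Δ → V) c) = c := fun c =>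
    LinearMap.congr_fun hg c
  have hge : ∀ i : Δ, g i = Finsupp.single i 1 := by
    intro i
    rw [← hgc (Finsupp.single i 1)]
    simp
  refine ⟨fun i => (Finsupp.lapply i).comp g, ?_, ?_, ?_⟩
  · intro i j hij
    simp [hge, Finsupp.single_eq_of_ne hij]
  · intro i
    simp [hge]
  · intro β hβ
    obtain ⟨c, hsupp, hnn, hsum⟩ := hexp β hβ
    have hβ' : β = ∑ i : Δ, c i • (i : V) := by
      rw [hsum, Finsupp.sum_of_support_subset c (s := Δ.toFinset) (by simpa using hsupp) _
        (by simp), ← Finset.sum_coe_sort]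
      exact Fintype.sum_equiv (Equiv.subtypeEquivRight (by simp)) _ _ (fun _ => rfl)
    have hx : ∀ i : Δ, g β i = c i := by
      intro i
      conv_lhs => rw [hβ']
      simp [hge, Finsupp.single_apply]
    constructor
    · intro i
      simpa [hx] using hnn i
    · simpa [hx] using hβ'

theorem IsSimpleSystem.exists_simpleData [FiniteDimensional ℝ V]
    {W : Subgroup (V ≃ₗᵢ[ℝ] V)} {Φ : Set V} (hΦ : IsRootSystem W Φ) {a : V} (ha : IsGeneric W a)
    {Δ : Set V} [Fintype Δ] (hΔ : IsSimpleSystem (posSystem a Φ) Δ)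
    {r : V → (V ≃ₗᵢ[ℝ] V)} (hr : ∀ α ∈ Δ, r α ∈ W ∧ IsReflAlong (r α) α) :
    ∃ x : Δ → V →ₗ[ℝ] ℝ, SimpleData Φ a ((↑) : Δ → V) (fun i => r i) x := by
  obtain ⟨x, hx0, hx1, hx⟩ := exists_coords hΔ
  refine ⟨x, hΦ.finite, fun i => (hΔ.1 i.2).1, fun i => (hΔ.1 i.2).2, fun i => (hr i i.2).2,
    ?_, ?_, ?_, ?_, hx0, hx1, fun i β h1 h2 => (hx β ⟨h1, h2⟩).1 i,
    fun β h1 h2 => (hx β ⟨h1, h2⟩).2⟩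
  · intro i β hβ
    rw [← hΦ.stable _ (hr i i.2).1]
    exact Set.mem_image_of_mem _ hβ
  · intro β hβ
    have : -β ∈ ({β, -β} : Set V) := by simp
    rw [← hΦ.line β hβ] at this
    exact this.1
  · intro β hβ h0
    have hs := isReflAlong_reflection (hΦ.ne_zero β hβ)
    have hsW : (ℝ ∙ β)ᗮ.reflection ∈ W := by
      rw [hΦ.gen]
      exact Subgroup.subset_closure ⟨β, hβ, hs⟩
    refine ha _ hsW ⟨β, hs⟩ ?_
    rw [hs.2, h0]
    simp
  · intro i β hβ c hc
    have : β ∈ {β ∈ Φ | ∃ t : ℝ, β = t • (i : V)} := ⟨hβ, c, hc⟩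
    rw [hΦ.line i (hΔ.1 i.2).1] at this
    simpa using this

/-- `(W, S)` is a Coxeter system: the matrix of orders `M(α,β) = o(s_α s_β)`
is a Coxeter matrix with off-diagonal entries at least `2`, and the canonical map from the
Coxeter group presented by `M` to `W` sending the generator indexed by `α` to `s_α` is an
isomorphism (packaged as a `CoxeterSystem` whose simple generators are the `s_α`). -/
theorem isCoxeterSystem_of_simpleSystem [FiniteDimensional ℝ V]
    (W : Subgroup (V ≃ₗᵢ[ℝ] V)) (hWfin : (W : Set (V ≃ₗᵢ[ℝ] V)).Finite)
    (Φ : Set V) (hΦ : IsRootSystem W Φ) (a : V) (ha : IsGeneric W a)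
    (Δ : Set V) (hΔ : IsSimpleSystem (posSystem a Φ) Δ)
    (r : V → (V ≃ₗᵢ[ℝ] V)) (hr : ∀ α ∈ Δ, r α ∈ W ∧ IsReflAlong (r α) α) :
    ∃ M : CoxeterMatrix Δ,
      (∀ α β : Δ, M.M α β = orderOf (r α * r β)) ∧
      (∀ α β : Δ, α ≠ β → 2 ≤ M.M α β) ∧
      ∃ cs : CoxeterSystem M W, ∀ α : Δ, (cs.simple α : V ≃ₗᵢ[ℝ] V) = r α := by
  have : Fintype Δ := (hΦ.finite.subset fun α h => (hΔ.1 h).1).fintype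
  obtain ⟨x, D⟩ := hΔ.exists_simpleData hΦ ha hr
  have hrr : ∀ α : Δ, r α * r α = 1 := fun α => (D.refl α).mul_self
  have hinv : ∀ α : Δ, (r α)⁻¹ = r α := fun α => inv_eq_of_mul_eq_one_right (hrr α)
  have hne : ∀ α β : Δ, α ≠ β → orderOf (r α * r β) ≠ 1 := by
    intro α β hαβ h
    rw [orderOf_eq_one_iff, mul_eq_one_iff_eq_inv, hinv] at h
    -- If `r α = r β`, then `-α = r α α = r β α ∈ α + ℝβ`; compare the `α`-coordinates.
    have h1 := D.x_apply hαβ (α : V)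
    rw [← h, (D.refl α).apply_self, map_neg, D.x_self] at h1
    norm_num at h1
  have hpos : ∀ α β : Δ, 0 < orderOf (r α * r β) := by
    intro α β
    have : Finite W := hWfin
    have h := orderOf_pos (⟨r α * r β, mul_mem (hr α α.2).1 (hr β β.2).1⟩ : W)
    rwa [← Subgroup.orderOf_coe] at h
  let M : CoxeterMatrix Δ :=
    { M := fun α β => orderOf (r α * r β)
      isSymm := by
        ext α β
        change orderOf (r β * r α) = orderOf (r α * r β)
        rw [← orderOf_inv, mul_inv_rev, hinv, hinv]
      diagonal := fun α => by rw [hrr, orderOf_one]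
      off_diagonal := hne }
  have hM : ∀ α β : Δ, M α β = orderOf (r α * r β) := fun _ _ => rfl
  refine ⟨M, hM, fun α β h => ?_, ?_⟩
  · have h1 := hne α β h
    have h2 := hpos α β
    rw [hM]
    omega
  let cs₀ := M.toCoxeterSystem
  have hlift : M.IsLiftable (fun α : Δ => r α) := fun α β => by
    rw [hM]
    exact pow_orderOf_eq_one _
  let φ : M.Group →* (V ≃ₗᵢ[ℝ] V) := cs₀.lift ⟨_, hlift⟩
  have hφ : ∀ α : Δ, φ (cs₀.simple α) = r α := fun α => cs₀.lift_apply_simple hlift α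
  have L : LiftData (fun α : Δ => r α) cs₀.simple φ := by
    refine ⟨hφ, cs₀.simple_mul_simple_self, fun α β n h => ?_, fun y => ?_⟩
    · obtain ⟨k, rfl⟩ := orderOf_dvd_of_pow_eq_one h
      rw [pow_mul, ← hM, cs₀.simple_mul_simple_pow, one_pow]
    · obtain ⟨ω, hω⟩ := cs₀.wordProd_surjective y
      exact ⟨ω, hω.symm⟩
  have hmap : ∀ ω : List Δ, wordMap (fun α : Δ => r α) ω ∈ φ.range := by
    intro ω
    induction ω with
    | nil => rw [wordMap_nil]; exact one_mem _
    | cons α ω ih =>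
      rw [wordMap_cons]
      exact mul_mem ⟨_, hφ α⟩ ih
  have hrange : φ.range = W := by
    apply le_antisymm
    · rintro _ ⟨y, rfl⟩
      obtain ⟨ω, rfl⟩ := L.exists_word y
      rw [map_list_prod]
      refine list_prod_mem ?_
      intro g hg
      simp only [List.map_map, List.mem_map] at hg
      obtain ⟨α, -, rfl⟩ := hg
      rw [Function.comp_apply, hφ]
      exact (hr α α.2).1
    · conv_lhs => rw [hΦ.gen]
      rw [Subgroup.closure_le]
      rintro g ⟨β, hβ, hg⟩
      obtain ⟨ω, α, hω⟩ := D.exists_wordMap_eq hβ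
      have h := (D.refl α).conj hg hω
      have hg' := eq_mul_inv_of_mul_eq h.symm
      rw [hg']
      exact mul_mem (mul_mem (hmap ω) ⟨_, hφ α⟩) (inv_mem (hmap ω))
  let E : M.Group ≃* W :=
    (MonoidHom.ofInjective (D.lift_injective L)).trans (MulEquiv.subgroupCongr hrange)
  exact ⟨⟨E.symm⟩, fun α => hφ α⟩
end

section
/- Let W be a finite reflection group with root system Φ, a a generic point, Φ⁺ = {α ∈ Φ : ⟨a,α⟩ > 0}, and Δ a simple system for Φ⁺. Then the permutahedron admits the half-space description: conv{w(a) : w ∈ W} = {x ∈ V : x − a ∈ span_ℝ(Δ) and for all w ∈ W and all α ∈ Δ, c_α(w⁻¹(x) − a) ≤ 0}, where c_α is the α-th coordinate functional with respect to the basis Δ of span_ℝ(Δ). -/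
/-!
The proof compares both sides through the simple roots.

Inclusion of the orbit polytope in the half-spaces: it suffices that `a - w a` is a nonnegative
combination of `Δ` for every `w ∈ W`. Every `w ∈ W` is a product of reflections in simple roots
(`isWord_of_mem`), and the claim follows by induction on the length of such a word
(`inCone_sub_word`): in `w = u s_α`, either `u α` is positive, so that
`a - w a = (a - u a) + k (u α)` with `k ≥ 0`, or `u α` is negative, and then the exchange
property (`exchange`) rewrites `w` as a shorter word. Both generation by simple reflections and the
exchange property rest on the fact that `s_α`, for `α` simple, permutes the positive roots other
than `α` (`simpleRefl_pos`).

Conversely, if a point `x` of the half-space intersection were outside the polytope, a linear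
functional `⟪l, ·⟫` would be strictly larger at `x` than on the whole orbit. Some `w⁻¹ l` is
dominant (`exists_dominant`), hence nonpositive on the combination `w⁻¹ x - a` of simple roots with
nonpositive coefficients, which contradicts `⟪l, x⟫ > ⟪l, w a⟫`.
-/

open scoped RealInnerProductSpace

variable {V : Type*} [NormedAddCommGroup V] [InnerProductSpace ℝ V]

/-! ### Reflections -/

/-- The orthogonal reflection in the hyperplane orthogonal to `α`. -/
noncomputable def rootRefl (α : V) : V ≃ₗᵢ[ℝ] V := (ℝ ∙ α)ᗮ.reflection

theorem rootRefl_apply (α v : V) : rootRefl α v = v - ((2 * ⟪v, α⟫ / ⟪α, α⟫) • α) := by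
  rw [rootRefl, Submodule.reflection_orthogonal_apply, Submodule.reflection_singleton_apply,
    real_inner_comm, real_inner_self_eq_norm_sq]
  simp only [RCLike.ofReal_real_eq_id, id]
  rw [neg_sub, mul_div_assoc, mul_smul, two_smul, two_smul]

theorem isReflAlong_rootRefl {α : V} (h : α ≠ 0) : IsReflAlong (rootRefl α) α :=
  ⟨h, rootRefl_apply α⟩

theorem IsReflAlong.eq_rootRefl {s : V ≃ₗᵢ[ℝ] V} {α : V} (h : IsReflAlong s α) : s = rootRefl α := by
  ext v
  rw [h.2, rootRefl_apply]

theorem rootRefl_mul_self (α : V) : rootRefl α * rootRefl α = 1 := by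
  ext v
  simp [rootRefl]

theorem rootRefl_inv (α : V) : (rootRefl α)⁻¹ = rootRefl α :=
  inv_eq_of_mul_eq_one_left (rootRefl_mul_self α)

theorem rootRefl_conj (w : V ≃ₗᵢ[ℝ] V) (γ : V) : rootRefl (w γ) * w = w * rootRefl γ := by
  ext v
  simp [rootRefl_apply]

theorem rootRefl_neg (α : V) : rootRefl (-α) = rootRefl α := by
  ext v
  simp [rootRefl_apply, neg_div]

/-! ### Coordinates with respect to the simple roots -/

/-- `f α`, for `α ∈ Δ`, is a linear functional on `V` restricting on `span Δ` to the coordinate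
functional of `α` in the basis `Δ`. -/
def IsCoord (Δ : Set V) (f : V → V →ₗ[ℝ] ℝ) : Prop :=
  ∀ α ∈ Δ, ∀ c : V →₀ ℝ, (c.support : Set V) ⊆ Δ → f α (c.sum fun v r => r • v) = c α

theorem exists_isCoord {Δ : Set V} (h : LinearIndependent ℝ ((↑) : Δ → V)) :
    ∃ f : V → V →ₗ[ℝ] ℝ, IsCoord Δ f := by
  classical
  have h' : LinearIndepOn ℝ id Δ := h
  let b := Module.Basis.extend h'
  have hsub : Δ ⊆ h'.extend (Set.subset_univ _) := h'.subset_extend _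
  refine ⟨fun α => if hα : α ∈ Δ then b.coord ⟨α, hsub hα⟩ else 0, ?_⟩
  intro α hα c hc
  have key : ∀ v ∈ Δ, b.coord ⟨α, hsub hα⟩ v = if v = α then 1 else 0 := by
    intro v hv
    have hbv : b ⟨v, hsub hv⟩ = v := Module.Basis.extend_apply_self h' _
    conv_lhs => rw [← hbv]
    rw [Module.Basis.coord_apply, Module.Basis.repr_self_apply]
    simp
  simp only [hα, dif_pos]
  rw [Finsupp.sum, map_sum]
  have : ∀ v ∈ c.support, b.coord ⟨α, hsub hα⟩ (c v • v) = if v = α then c v else 0 := by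
    intro v hv
    rw [map_smul, key v (hc hv)]
    simp
  rw [Finset.sum_congr rfl this, Finset.sum_ite_eq']
  by_cases hs : α ∈ c.support
  · simp [hs]
  · simp [Finsupp.notMem_support_iff.1 hs]

/-- `v` lies in the convex cone generated by `Δ`: it is in the span of `Δ` and has nonnegative
coordinates. -/
def InCone (Δ : Set V) (f : V → V →ₗ[ℝ] ℝ) (v : V) : Prop :=
  v ∈ Submodule.span ℝ Δ ∧ ∀ α ∈ Δ, 0 ≤ f α v

theorem InCone.add_smul {Δ : Set V} {f : V → V →ₗ[ℝ] ℝ} {u v : V} (hu : InCone Δ f u)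
    (hv : InCone Δ f v) {k : ℝ} (hk : 0 ≤ k) : InCone Δ f (u + k • v) := by
  refine ⟨add_mem hu.1 (Submodule.smul_mem _ _ hv.1), fun α hα => ?_⟩
  rw [map_add, map_smul, smul_eq_mul]
  exact add_nonneg (hu.2 α hα) (mul_nonneg hk (hv.2 α hα))

theorem IsCoord.eq_zero {Δ : Set V} {f : V → V →ₗ[ℝ] ℝ} (hf : IsCoord Δ f) {v : V}
    (hv : v ∈ Submodule.span ℝ Δ) (h0 : ∀ α ∈ Δ, f α v = 0) : v = 0 := by
  obtain ⟨c, hc, rfl⟩ := Submodule.mem_span_set.1 hv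
  refine Finset.sum_eq_zero fun α hα => ?_
  have := h0 α (hc hα)
  rw [hf α (hc hα) c hc] at this
  simp [this]

theorem IsCoord.apply_self {Δ : Set V} {f : V → V →ₗ[ℝ] ℝ} (hf : IsCoord Δ f) {α : V}
    (hα : α ∈ Δ) : f α α = 1 := by
  have := hf α hα (Finsupp.single α 1) (by
    intro v hv
    have := Finsupp.support_single_subset hv
    simp_all)
  simpa using this

theorem IsCoord.apply_ne {Δ : Set V} {f : V → V →ₗ[ℝ] ℝ} (hf : IsCoord Δ f) {α β : V}
    (hα : α ∈ Δ) (hβ : β ∈ Δ) (hne : β ≠ α) : f α β = 0 := by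
  have := hf α hα (Finsupp.single β 1) (by
    intro v hv
    have := Finsupp.support_single_subset hv
    simp_all)
  simpa [Finsupp.single_apply, hne] using this

theorem InCone.inner_nonneg {Δ : Set V} {f : V → V →ₗ[ℝ] ℝ} (hf : IsCoord Δ f) {v m : V}
    (hv : InCone Δ f v) (hm : ∀ α ∈ Δ, 0 ≤ ⟪m, α⟫) : 0 ≤ ⟪m, v⟫ := by
  obtain ⟨hs, hpos⟩ := hv
  obtain ⟨c, hc, rfl⟩ := Submodule.mem_span_set.1 hs
  rw [Finsupp.sum, inner_sum]
  refine Finset.sum_nonneg fun α hα => ?_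
  have := hpos α (hc hα)
  rw [hf α (hc hα) c hc] at this
  rw [real_inner_smul_right]
  exact mul_nonneg this (hm α (hc hα))

/-! ### Positive and simple roots -/

section Roots

variable {W : Subgroup (V ≃ₗᵢ[ℝ] V)} {Φ : Set V} {a : V} {Δ : Set V} {f : V → V →ₗ[ℝ] ℝ}

theorem rootRefl_mem (hΦ : IsRootSystem W Φ) {α : V} (hα : α ∈ Φ) : rootRefl α ∈ W := by
  rw [hΦ.gen]
  exact Subgroup.subset_closure ⟨α, hα, isReflAlong_rootRefl (hΦ.ne_zero α hα)⟩

theorem map_root (hΦ : IsRootSystem W Φ) {w : V ≃ₗᵢ[ℝ] V} (hw : w ∈ W) {α : V} (hα : α ∈ Φ) :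
    w α ∈ Φ := by
  rw [← hΦ.stable w hw]
  exact ⟨α, hα, rfl⟩

theorem neg_root (hΦ : IsRootSystem W Φ) {α : V} (hα : α ∈ Φ) : -α ∈ Φ := by
  have : -α ∈ {β ∈ Φ | ∃ t : ℝ, β = t • α} := by
    rw [hΦ.line α hα]
    simp
  exact this.1

theorem pos_or_neg (hΦ : IsRootSystem W Φ) (ha : IsGeneric W a) {α : V} (hα : α ∈ Φ) :
    α ∈ posSystem a Φ ∨ -α ∈ posSystem a Φ := by
  have hne : ⟪a, α⟫ ≠ 0 := by
    intro h0
    refine ha _ (rootRefl_mem hΦ hα) ⟨α, isReflAlong_rootRefl (hΦ.ne_zero α hα)⟩ ?_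
    rw [rootRefl_apply, h0]
    simp
  rcases lt_or_gt_of_ne hne with h | h
  · exact Or.inr ⟨neg_root hΦ hα, by rw [inner_neg_right]; linarith⟩
  · exact Or.inl ⟨hα, h⟩

theorem inCone_of_pos (hΔ : IsSimpleSystem (posSystem a Φ) Δ) (hf : IsCoord Δ f) {β : V}
    (hβ : β ∈ posSystem a Φ) : InCone Δ f β := by
  obtain ⟨c, hc, hpos, rfl⟩ := hΔ.2.2 β hβ
  exact ⟨Submodule.mem_span_set.2 ⟨c, hc, rfl⟩, fun α hα => by rw [hf α hα c hc]; exact hpos α⟩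

/-- A simple reflection permutes the positive roots other than its own simple root: such a root has
a positive coordinate along another simple root, which the reflection leaves unchanged. -/
theorem simpleRefl_pos (hΦ : IsRootSystem W Φ) (ha : IsGeneric W a)
    (hΔ : IsSimpleSystem (posSystem a Φ) Δ) (hf : IsCoord Δ f) {α β : V} (hα : α ∈ Δ)
    (hβ : β ∈ posSystem a Φ) (hne : β ≠ α) : rootRefl α β ∈ posSystem a Φ := by
  have hαp := hΔ.1 hα
  rcases pos_or_neg hΦ ha (map_root hΦ (rootRefl_mem hΦ hαp.1) hβ.1) with h | h
  · exact h
  exfalso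
  have hβc := inCone_of_pos hΔ hf hβ
  have hnc := inCone_of_pos hΔ hf h
  have hcoord : ∀ γ ∈ Δ, γ ≠ α → f γ β = 0 := by
    intro γ hγ hγα
    have h1 := hβc.2 γ hγ
    have h2 := hnc.2 γ hγ
    rw [rootRefl_apply, map_neg, map_sub, map_smul, hf.apply_ne hγ hα hγα.symm] at h2
    simp at h2
    linarith
  have hmul : β - f α β • α = 0 := by
    refine hf.eq_zero (sub_mem hβc.1 (Submodule.smul_mem _ _ (Submodule.subset_span hα))) ?_
    intro γ hγ
    rw [map_sub, map_smul, smul_eq_mul]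
    by_cases hγα : γ = α
    · subst hγα
      rw [hf.apply_self hγ]
      ring
    · rw [hcoord γ hγ hγα, hf.apply_ne hγ hα (Ne.symm hγα)]
      ring
  have : β ∈ ({α, -α} : Set V) := by
    rw [← hΦ.line α hαp.1]
    exact ⟨hβ.1, _, sub_eq_zero.1 hmul⟩
  rcases this with h' | h'
  · exact hne h'
  · have h1 := hβ.2
    have h2 := hαp.2
    rw [Set.mem_singleton_iff.1 h', inner_neg_right] at h1
    linarith

/-! ### Words in the simple reflections -/

/-- The product of the reflections along the entries of a list. -/
noncomputable def word (L : List V) : V ≃ₗᵢ[ℝ] V := (L.map rootRefl).prod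

theorem word_mem (hΦ : IsRootSystem W Φ) (hΔ : IsSimpleSystem (posSystem a Φ) Δ) {L : List V}
    (hL : ∀ α ∈ L, α ∈ Δ) : word L ∈ W := by
  refine Subgroup.list_prod_mem _ fun s hs => ?_
  obtain ⟨α, hα, rfl⟩ := List.mem_map.1 hs
  exact rootRefl_mem hΦ (hΔ.1 (hL α hα)).1

/-- `w` is a product of simple reflections. -/
def IsWord (Δ : Set V) (w : V ≃ₗᵢ[ℝ] V) : Prop := ∃ L : List V, (∀ α ∈ L, α ∈ Δ) ∧ w = word L

theorem IsWord.mul {u w : V ≃ₗᵢ[ℝ] V} (hu : IsWord Δ u) (hw : IsWord Δ w) : IsWord Δ (u * w) := by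
  obtain ⟨L, hL, rfl⟩ := hu
  obtain ⟨M, hM, rfl⟩ := hw
  refine ⟨L ++ M, ?_, by simp [word]⟩
  intro α hα
  rcases List.mem_append.1 hα with h | h
  exacts [hL α h, hM α h]

theorem isWord_rootRefl {α : V} (hα : α ∈ Δ) : IsWord Δ (rootRefl α) :=
  ⟨[α], by simpa using hα, by simp [word]⟩

theorem isWord_one : IsWord Δ 1 := ⟨[], by simp, by simp [word]⟩

theorem IsWord.inv {w : V ≃ₗᵢ[ℝ] V} (hw : IsWord Δ w) : IsWord Δ w⁻¹ := by
  obtain ⟨L, hL, rfl⟩ := hw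
  induction L with
  | nil => simpa [word] using isWord_one
  | cons α L ih =>
    have h : (word (α :: L))⁻¹ = (word L)⁻¹ * rootRefl α := by simp [word, rootRefl_inv]
    rw [h]
    exact (ih fun β hβ => hL β (List.mem_cons_of_mem _ hβ)).mul
      (isWord_rootRefl (hL α List.mem_cons_self))

/-- The reflection along a positive root is a product of simple reflections. For a counterexample
`β` with `⟪a, β⟫` minimal, a simple root `α` with `⟪β, α⟫ > 0` yields the positive root `s_α β`
with a smaller value of `⟪a, ·⟫`. -/
theorem isWord_rootRefl_pos (hΦ : IsRootSystem W Φ) (ha : IsGeneric W a)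
    (hΔ : IsSimpleSystem (posSystem a Φ) Δ) (hf : IsCoord Δ f) {β : V}
    (hβ : β ∈ posSystem a Φ) : IsWord Δ (rootRefl β) := by
  by_contra hcon
  have hfin : {γ ∈ posSystem a Φ | ¬ IsWord Δ (rootRefl γ)}.Finite :=
    hΦ.finite.subset fun γ hγ => hγ.1.1
  obtain ⟨γ, ⟨hγ, hγw⟩, hmin⟩ := Set.exists_min_image _ (fun γ => ⟪a, γ⟫) hfin ⟨β, hβ, hcon⟩
  have hex : ∃ α ∈ Δ, 0 < ⟪γ, α⟫ := by
    by_contra! hno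
    have h1 := (inCone_of_pos hΔ hf hγ).inner_nonneg hf (m := -γ) (fun α hα => by
      rw [inner_neg_left]
      linarith [hno α hα])
    rw [inner_neg_left] at h1
    have h2 := real_inner_self_pos.2 (hΦ.ne_zero γ hγ.1)
    linarith
  obtain ⟨α, hα, hpos⟩ := hex
  by_cases hne : γ = α
  · exact hγw (hne ▸ isWord_rootRefl hα)
  have hδ := simpleRefl_pos hΦ ha hΔ hf hα hγ hne
  have hδw : ¬ IsWord Δ (rootRefl (rootRefl α γ)) := by
    intro h
    apply hγw
    have h1 : rootRefl γ = rootRefl α * rootRefl (rootRefl α γ) * rootRefl α := by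
      rw [mul_assoc, rootRefl_conj, ← mul_assoc, rootRefl_mul_self, one_mul]
    rw [h1]
    exact ((isWord_rootRefl hα).mul h).mul (isWord_rootRefl hα)
  have hle := hmin _ ⟨hδ, hδw⟩
  have hαp := hΔ.1 hα
  have hk : 0 < 2 * ⟪γ, α⟫ / ⟪α, α⟫ * ⟪a, α⟫ :=
    mul_pos (div_pos (by linarith) (real_inner_self_pos.2 (hΦ.ne_zero α hαp.1))) hαp.2
  simp only [rootRefl_apply, inner_sub_right, real_inner_smul_right] at hle
  linarith

theorem isWord_of_mem (hΦ : IsRootSystem W Φ) (ha : IsGeneric W a)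
    (hΔ : IsSimpleSystem (posSystem a Φ) Δ) (hf : IsCoord Δ f) {w : V ≃ₗᵢ[ℝ] V}
    (hw : w ∈ W) : IsWord Δ w := by
  rw [hΦ.gen] at hw
  induction hw using Subgroup.closure_induction with
  | mem s hs =>
    obtain ⟨α, hα, hs⟩ := hs
    rw [hs.eq_rootRefl]
    rcases pos_or_neg hΦ ha hα with h | h
    · exact isWord_rootRefl_pos hΦ ha hΔ hf h
    · rw [← rootRefl_neg]
      exact isWord_rootRefl_pos hΦ ha hΔ hf h
  | one => exact isWord_one
  | mul u v _ _ hu hv => exact hu.mul hv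
  | inv u _ hu => exact hu.inv

/-- The exchange property: if a word sends the positive root `γ` to a negative root, then
multiplying it by `s_γ` amounts to deleting one of its letters. -/
theorem exchange (hΦ : IsRootSystem W Φ) (ha : IsGeneric W a)
    (hΔ : IsSimpleSystem (posSystem a Φ) Δ) (hf : IsCoord Δ f) {γ : V}
    (hγ : γ ∈ posSystem a Φ) (L : List V) (hL : ∀ α ∈ L, α ∈ Δ)
    (hneg : word L γ ∉ posSystem a Φ) :
    ∃ L' : List V, (∀ α ∈ L', α ∈ Δ) ∧ L'.length + 1 = L.length ∧
      word L' = word L * rootRefl γ := by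
  induction L with
  | nil => exact absurd hγ (by simpa [word] using hneg)
  | cons α L ih =>
    have hL0 : ∀ β ∈ L, β ∈ Δ := fun β hβ => hL β (List.mem_cons_of_mem _ hβ)
    have hα : α ∈ Δ := hL α List.mem_cons_self
    have hcons : ∀ M : List V, word (α :: M) = rootRefl α * word M := fun M => by simp [word]
    by_cases hδ : word L γ ∈ posSystem a Φ
    · -- Only `α` is made negative by `s_α`, so the letter to delete is the first one.
      have hδα : word L γ = α := by
        by_contra hne
        exact hneg (by simpa [hcons] using simpleRefl_pos hΦ ha hΔ hf hα hδ hne)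
      refine ⟨L, hL0, by simp, ?_⟩
      have h := rootRefl_conj (word L) γ
      rw [hδα] at h
      rw [hcons, mul_assoc, ← h, ← mul_assoc, rootRefl_mul_self, one_mul]
    · obtain ⟨L', h1, h2, h3⟩ := ih hL0 hδ
      refine ⟨α :: L', ?_, by simp [← h2], by rw [hcons, hcons, h3, mul_assoc]⟩
      intro β hβ
      rcases List.mem_cons.1 hβ with h | h
      exacts [h ▸ hα, h1 β h]

theorem inCone_sub_word (hΦ : IsRootSystem W Φ) (ha : IsGeneric W a)
    (hΔ : IsSimpleSystem (posSystem a Φ) Δ) (hf : IsCoord Δ f) (n : ℕ) :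
    ∀ L : List V, L.length = n → (∀ α ∈ L, α ∈ Δ) → InCone Δ f (a - word L a) := by
  induction n using Nat.strong_induction_on with
  | _ n ih =>
    intro L hn hL
    rcases L.eq_nil_or_concat with rfl | ⟨M, α, rfl⟩
    · simp [word, InCone]
    have hM : ∀ β ∈ M, β ∈ Δ := fun β hβ => hL β (by simp [hβ])
    have hα : α ∈ Δ := hL α (by simp)
    have hw : word (M ++ [α]) = word M * rootRefl α := by simp [word]
    have hlen : M.length + 1 = n := by simpa using hn
    by_cases hpos : word M α ∈ posSystem a Φ
    · have hαp := hΔ.1 hα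
      have hk : 0 ≤ 2 * ⟪a, α⟫ / ⟪α, α⟫ :=
        div_nonneg (by linarith [hαp.2]) real_inner_self_nonneg
      have h := (ih M.length (by omega) M rfl hM).add_smul (inCone_of_pos hΔ hf hpos) hk
      convert h using 1
      rw [List.concat_eq_append, hw, LinearIsometryEquiv.coe_mul, Function.comp_apply, rootRefl_apply, map_sub, map_smul]
      abel
    · obtain ⟨L', h1, h2, h3⟩ := exchange hΦ ha hΔ hf (hΔ.1 hα) M hM hpos
      rw [List.concat_eq_append, hw, ← h3]
      exact ih L'.length (by omega) L' rfl h1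

theorem inCone_sub (hΦ : IsRootSystem W Φ) (ha : IsGeneric W a)
    (hΔ : IsSimpleSystem (posSystem a Φ) Δ) (hf : IsCoord Δ f) {w : V ≃ₗᵢ[ℝ] V}
    (hw : w ∈ W) : InCone Δ f (a - w a) := by
  obtain ⟨L, hL, rfl⟩ := isWord_of_mem hΦ ha hΔ hf hw
  exact inCone_sub_word hΦ ha hΔ hf _ L rfl hL

/-! ### The two inclusions -/

theorem map_span (hΦ : IsRootSystem W Φ) (ha : IsGeneric W a)
    (hΔ : IsSimpleSystem (posSystem a Φ) Δ) (hf : IsCoord Δ f) {w : V ≃ₗᵢ[ℝ] V}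
    (hw : w ∈ W) {v : V} (hv : v ∈ Submodule.span ℝ Δ) : w v ∈ Submodule.span ℝ Δ := by
  induction hv using Submodule.span_induction with
  | mem α hα =>
    rcases pos_or_neg hΦ ha (map_root hΦ hw (hΔ.1 hα).1) with h | h
    · exact (inCone_of_pos hΔ hf h).1
    · simpa using neg_mem (inCone_of_pos hΔ hf h).1
  | zero => simp
  | add x y _ _ hx hy => rw [map_add]; exact add_mem hx hy
  | smul t x _ hx => rw [map_smul]; exact Submodule.smul_mem _ _ hx

/-- Every `W`-orbit contains a dominant vector: the one maximising the inner product with `a`. -/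
theorem exists_dominant (hWfin : (W : Set (V ≃ₗᵢ[ℝ] V)).Finite) (hΦ : IsRootSystem W Φ)
    (hΔ : IsSimpleSystem (posSystem a Φ) Δ) (l : V) :
    ∃ w ∈ W, ∀ α ∈ Δ, 0 ≤ ⟪w l, α⟫ := by
  obtain ⟨w, hw, hmax⟩ := Set.exists_max_image _ (fun w : V ≃ₗᵢ[ℝ] V => ⟪a, w l⟫) hWfin
    ⟨1, W.one_mem⟩
  refine ⟨w, hw, fun α hα => ?_⟩
  by_contra! hneg
  have hαp := hΔ.1 hα
  have h := hmax _ (W.mul_mem (rootRefl_mem hΦ hαp.1) hw)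
  have hk : 2 * ⟪w l, α⟫ / ⟪α, α⟫ * ⟪a, α⟫ < 0 :=
    mul_neg_of_neg_of_pos
      (div_neg_of_neg_of_pos (by linarith) (real_inner_self_pos.2 (hΦ.ne_zero α hαp.1))) hαp.2
  simp only [LinearIsometryEquiv.coe_mul, Function.comp_apply, rootRefl_apply, inner_sub_right,
    real_inner_smul_right] at h
  linarith

end Roots

/-- the half-space (`ℋ`-) description of the permutahedron: `x` lies in
`conv(W·a)` iff `x - a ∈ span ℝ Δ` and for all `w ∈ W` and `α ∈ Δ` the `α`-coordinate
(w.r.t. the basis `Δ`) of `w⁻¹(x) - a` is nonpositive. -/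
theorem permutahedron_halfspace_description [FiniteDimensional ℝ V]
    (W : Subgroup (V ≃ₗᵢ[ℝ] V)) (hWfin : (W : Set (V ≃ₗᵢ[ℝ] V)).Finite)
    (Φ : Set V) (hΦ : IsRootSystem W Φ) (a : V) (ha : IsGeneric W a)
    (Δ : Set V) (hΔ : IsSimpleSystem (posSystem a Φ) Δ) :
    permutahedron W a =
      {x : V | x - a ∈ Submodule.span ℝ Δ ∧
        ∀ w ∈ W, ∀ α ∈ Δ, ∀ c : V →₀ ℝ, (c.support : Set V) ⊆ Δ →
          w⁻¹ x - a = (c.sum fun v r => r • v) → c α ≤ 0} := by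
  obtain ⟨f, hf⟩ := exists_isCoord hΔ.2.1
  apply Set.Subset.antisymm
  · -- The half-space conditions in terms of `f` are convex and hold on the orbit.
    have hsub : permutahedron W a ⊆
        {x : V | x - a ∈ Submodule.span ℝ Δ ∧ ∀ w ∈ W, ∀ α ∈ Δ, f α (w⁻¹ x - a) ≤ 0} := by
      refine convexHull_min ?_ ?_
      · rintro x ⟨u, hu, rfl⟩
        refine ⟨by simpa using neg_mem (inCone_sub hΦ ha hΔ hf hu).1, fun w hw α hα => ?_⟩
        have h := (inCone_sub hΦ ha hΔ hf (W.mul_mem (W.inv_mem hw) hu)).2 α hα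
        rw [← neg_sub, map_neg, LinearIsometryEquiv.coe_mul, Function.comp_apply] at h
        linarith
      · rintro x ⟨hx1, hx2⟩ y ⟨hy1, hy2⟩ s t hs ht hst
        have hcomb : ∀ p q : V, s • p + t • q - a = s • (p - a) + t • (q - a) := by
          intro p q
          have : a = (s + t) • a := by rw [hst, one_smul]
          rw [smul_sub, smul_sub]
          nth_rewrite 1 [this]
          rw [add_smul]
          abel
        refine ⟨?_, fun w hw α hα => ?_⟩
        · rw [hcomb]
          exact add_mem (Submodule.smul_mem _ _ hx1) (Submodule.smul_mem _ _ hy1)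
        · rw [map_add, map_smul, map_smul, hcomb, map_add, map_smul, map_smul, smul_eq_mul,
            smul_eq_mul]
          have h1 := mul_nonpos_of_nonneg_of_nonpos hs (hx2 w hw α hα)
          have h2 := mul_nonpos_of_nonneg_of_nonpos ht (hy2 w hw α hα)
          linarith
    intro x hx
    obtain ⟨h1, h2⟩ := hsub hx
    refine ⟨h1, fun w hw α hα c hc heq => ?_⟩
    have := h2 w hw α hα
    rwa [heq, hf α hα c hc] at this
  · rintro x ⟨hx, hineq⟩
    by_contra hnot
    have horb : (orbitSet W a).Finite := by
      refine (hWfin.image fun w => w a).subset ?_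
      rintro y ⟨w, hw, rfl⟩
      exact ⟨w, hw, rfl⟩
    obtain ⟨g, r, hg1, hg2⟩ := geometric_hahn_banach_closed_point (convex_convexHull ℝ _)
      (Set.Finite.isClosed_convexHull ℝ horb) hnot
    -- `l` represents the separating functional.
    obtain ⟨l, rfl⟩ := (InnerProductSpace.toDual ℝ V).surjective g
    simp only [InnerProductSpace.toDual_apply_apply] at hg1 hg2
    obtain ⟨w, hw, hdom⟩ := exists_dominant hWfin hΦ hΔ l
    have h1 := hg1 (w⁻¹ a) (subset_convexHull ℝ _ ⟨w⁻¹, W.inv_mem hw, rfl⟩)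
    have hspan : w x - a ∈ Submodule.span ℝ Δ := by
      have e : w x - a = w (x - a) - (a - w a) := by rw [map_sub]; abel
      rw [e]
      exact sub_mem (map_span hΦ ha hΔ hf hw hx) (inCone_sub hΦ ha hΔ hf hw).1
    have hcone : InCone Δ f (a - w x) := by
      refine ⟨by simpa using neg_mem hspan, fun α hα => ?_⟩
      obtain ⟨c, hc, hsum⟩ := Submodule.mem_span_set.1 hspan
      have h := hineq w⁻¹ (W.inv_mem hw) α hα c hc (by rw [inv_inv, hsum])
      rw [← neg_sub, map_neg, ← hsum, hf α hα c hc]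
      linarith
    have h2 := hcone.inner_nonneg hf hdom
    have h3 : ⟪w l, a⟫ = ⟪l, w⁻¹ a⟫ := by
      have ha' : w (w⁻¹ a) = a := w.apply_symm_apply a
      conv_lhs => rw [← ha']
      exact w.inner_map_map _ _
    rw [inner_sub_right, w.inner_map_map, h3] at h2
    linarith
end
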